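/- arXiv:2211.12066 — 5 statements merged into one kernel-verified Lean document; each statement's English description precedes it below -/
import Mathlib

section
/- Under the standing assumptions (H), let κ > 0 and let u be a solution of problem (P_κ). Then the Kelvin transformation u^♯ of u satisfies the integral equation u^♯(x) = ∫_{ℝ^N} Γ(x-y) β(y) u^♯(y)^p dy + κ (Γ*μ)^♯(x) for a.e. x ∈ ℝ^N, where β(x) := |x|^{(N-2)(p-1)-4} α(x/|x|²). Moreover, with a^♯ := (N-2)(p-1)-4-b, b^♯ := (N-2)(p-1)-4-a, c^♯ := -N+2-d, d^♯ := -N+2-c: limsup_{|x|→0} |x|^{-a^♯} β(x) < ∞, limsup_{|x|→∞} |x|^{-b^♯} β(x) < ∞, (Γ*μ)^♯ ∈ L^r_{c^♯,d^♯}, a^♯ > -2, p > (N+b^♯)/(N-2), c^♯ > -(a^♯+2)/(p-1), and d^♯ < -(b^♯+2)/(p-1). -/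
/-!
The inversion `x ↦ x* = x/|x|²` is a conformal involution of `ℝ^N \ {0}`: it satisfies
`|x* - y*| = |x - y| / (|x| |y|)`, so `Γ(x* - y*) = |x|^{N-2} |y|^{N-2} Γ(x - y)`
(`fundSol_kinv`), and its derivative at `z` is `|z|^{-2}` times a reflection, so its Jacobian is
`|z|^{-2N}` (`lintegral_kinv`). Evaluating the integral equation for `u` at `x*`, multiplying by
`|x|^{2-N}` and substituting `y = z*` in the integral gives the equation for `u^♯`, the powers of
`|z|` adding up to the weight of `β` (`gammaConv_kinv`, `kelvin_equation`). Almost everywhere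
statements pull back because the inversion preserves null sets (`quasi_kinv`).

For the weighted norm, the inversion exchanges the annuli `A(0,R)` and `A(0,2/R)` up to a null
set, with Jacobian at most `R^{2N}`. Bounding the push-forward of Lebesgue measure on `A(0,R)`
(`map_kinv_restrict_le`) handles finite and infinite `r` at once; the weights at `R` and `2/R`
are then compared by `omegaWt_dual`. The bounds on `β` follow since the inversion exchanges
neighbourhoods of `0` and of infinity, and the remaining inequalities are linear in the exponents.
-/


open MeasureTheory Metric ENNReal Filter

noncomputable section

abbrev Euc (N : ℕ) : Type := EuclideanSpace ℝ (Fin N)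

/-- The fundamental solution `Γ(x) = |x|^{2-N} / (N (N-2) ω_N)` of `-Δ` on `ℝ^N`. -/
def fundSol (N : ℕ) (x : Euc N) : ℝ :=
  ‖x‖ ^ (2 - (N : ℝ)) / ((N : ℝ) * ((N : ℝ) - 2) * (volume (ball (0 : Euc N) 1)).toReal)

/-- The annulus `A(0,R) = B(0,R) \ B(0,R/2)`. -/
def annulusA (N : ℕ) (R : ℝ) : Set (Euc N) := ball (0 : Euc N) R \ ball 0 (R / 2)

/-- The weight `ω_{β,γ}(R)`. -/
def omegaWt (β γ R : ℝ) : ℝ := if R ≤ 1 then R ^ β else R ^ γ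

/-- The weighted norm `‖f‖_{L^q_{β,γ}} = sup_{R>0} R^{-N/q} ω_{β,γ}(R)⁻¹ ‖f‖_{L^q(A(0,R))}`. -/
def wNorm (N : ℕ) (q : ℝ≥0∞) (β γ : ℝ) (f : Euc N → ℝ) : ℝ≥0∞ :=
  ⨆ R : {R : ℝ // 0 < R},
    ENNReal.ofReal (((R : ℝ) ^ (-((N : ℝ) / q.toReal))) / omegaWt β γ (R : ℝ)) *
      eLpNorm f q (volume.restrict (annulusA N (R : ℝ)))

/-- Membership in the weighted space `L^q_{β,γ}`. -/
def MemW (N : ℕ) (q : ℝ≥0∞) (β γ : ℝ) (f : Euc N → ℝ) : Prop :=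
  AEStronglyMeasurable f volume ∧ wNorm N q β γ f < ⊤

/-- `(Γ * f)(x) = ∫ Γ(x-y) f(y) dy` as an `ℝ≥0∞`-valued integral (for `f ≥ 0`). -/
def GammaConvFn (N : ℕ) (f : Euc N → ℝ) (x : Euc N) : ℝ≥0∞ :=
  ∫⁻ y, ENNReal.ofReal (fundSol N (x - y)) * ENNReal.ofReal (f y)

/-- `(Γ * μ)(x) = ∫ Γ(x-y) dμ(y)`. -/
def GammaConvMeas (N : ℕ) (μ : Measure (Euc N)) (x : Euc N) : ℝ≥0∞ :=
  ∫⁻ y, ENNReal.ofReal (fundSol N (x - y)) ∂μ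

/-- A solution of problem `(P_κ)`. -/
def IsSolution (N : ℕ) (α : Euc N → ℝ) (p : ℝ) (μ : Measure (Euc N)) (κ : ℝ)
    (u : Euc N → ℝ) : Prop :=
  Measurable u ∧ (∀ᵐ x, 0 < u x) ∧
    ∀ᵐ x, ENNReal.ofReal (u x)
      = GammaConvFn N (fun y => α y * u y ^ p) x + ENNReal.ofReal κ * GammaConvMeas N μ x

/-- A minimal solution of problem `(P_κ)`. -/
def IsMinSolution (N : ℕ) (α : Euc N → ℝ) (p : ℝ) (μ : Measure (Euc N)) (κ : ℝ)
    (u : Euc N → ℝ) : Prop :=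
  IsSolution N α p μ κ u ∧ ∀ v, IsSolution N α p μ κ v → ∀ᵐ x, u x ≤ v x

/-- The Kelvin transformation `f^♯(x) = |x|^{-N+2} f(x/|x|²)`. -/
def kelvin (N : ℕ) (f : Euc N → ℝ) (x : Euc N) : ℝ :=
  ‖x‖ ^ (-(N : ℝ) + 2) * f ((‖x‖ ^ 2)⁻¹ • x)

/-- The inversion `x ↦ x / |x|²` in the unit sphere; its value at `0` is `0`, which makes it an
involution of the whole space. -/
def kinv (N : ℕ) (x : Euc N) : Euc N := (‖x‖ ^ 2)⁻¹ • x

/-! ### Inversion and its Jacobian -/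

lemma kinv_eq_inversion (N : ℕ) : kinv N = EuclideanGeometry.inversion (0 : Euc N) 1 := by
  ext1 x
  simp [kinv, EuclideanGeometry.inversion]

lemma kinv_kinv (N : ℕ) (x : Euc N) : kinv N (kinv N x) = x := by
  rw [kinv_eq_inversion]
  exact EuclideanGeometry.inversion_involutive _ one_ne_zero x

lemma norm_kinv (N : ℕ) (x : Euc N) : ‖kinv N x‖ = ‖x‖⁻¹ := by
  rcases eq_or_ne x 0 with rfl | hx
  · simp [kinv]
  · have : ‖x‖ ≠ 0 := norm_ne_zero_iff.2 hx
    rw [kinv, norm_smul, norm_inv, norm_pow, norm_norm]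
    field_simp

lemma kinv_ne_zero {N : ℕ} {x : Euc N} (hx : x ≠ 0) : kinv N x ≠ 0 := by
  rw [← norm_ne_zero_iff, norm_kinv]
  exact inv_ne_zero (norm_ne_zero_iff.2 hx)

lemma norm_kinv_sub {N : ℕ} {x y : Euc N} (hx : x ≠ 0) (hy : y ≠ 0) :
    ‖kinv N x - kinv N y‖ = (‖x‖ * ‖y‖)⁻¹ * ‖x - y‖ := by
  have := EuclideanGeometry.dist_inversion_inversion hx hy 1
  rw [kinv_eq_inversion, ← dist_eq_norm, this]
  simp [dist_eq_norm]

lemma measurable_kinv (N : ℕ) : Measurable (kinv N) := by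
  unfold kinv
  fun_prop

lemma ae_ne_zero {N : ℕ} (hN : 3 ≤ N) : ∀ᵐ x : Euc N, x ≠ 0 := by
  have : Nonempty (Fin N) := ⟨⟨0, by omega⟩⟩
  exact Measure.ae_ne volume 0

/-- The Jacobian determinant of the inversion is `|z|^{-2N}`, because the derivative of the
inversion at `z` is `|z|^{-2}` times a reflection. -/
lemma lintegral_kinv {N : ℕ} (hN : 3 ≤ N) (g : Euc N → ℝ≥0∞) :
    ∫⁻ y, g y = ∫⁻ z, ENNReal.ofReal (‖z‖ ^ (-(2 * (N : ℝ)))) * g (kinv N z) := by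
  have : Nonempty (Fin N) := ⟨⟨0, by omega⟩⟩
  have himg : kinv N '' {(0 : Euc N)}ᶜ = {(0 : Euc N)}ᶜ := by
    ext y
    constructor
    · rintro ⟨x, hx, rfl⟩
      exact kinv_ne_zero hx
    · intro hy
      exact ⟨kinv N y, kinv_ne_zero hy, kinv_kinv N y⟩
  have key := lintegral_image_eq_lintegral_abs_det_fderiv_mul (volume : Measure (Euc N))
    (s := {(0 : Euc N)}ᶜ) (f := kinv N)
    (f' := fun x => (1 / dist x 0) ^ 2 •
      ((Submodule.span ℝ {x - 0})ᗮ.reflection : Euc N →L[ℝ] Euc N))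
    (measurableSet_singleton _).compl
    (fun x hx => by
      rw [kinv_eq_inversion]
      exact (EuclideanGeometry.hasFDerivAt_inversion hx).hasFDerivWithinAt)
    (fun x _ y _ h => by rw [← kinv_kinv N x, h, kinv_kinv]) g
  rw [himg, restrict_compl_singleton] at key
  rw [key]
  refine lintegral_congr_ae ?_
  filter_upwards [ae_ne_zero hN] with z hz
  congr 2
  have hz' : 0 < ‖z‖ := norm_pos_iff.2 hz
  have hdet : |ContinuousLinearMap.det
      ((Submodule.span ℝ {z - 0})ᗮ.reflection : Euc N →L[ℝ] Euc N)| = 1 := by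
    have h := Submodule.det_reflection (𝕜 := ℝ) (Submodule.span ℝ {z - 0})ᗮ
    have h2 : ContinuousLinearMap.det
      ((Submodule.span ℝ {z - 0})ᗮ.reflection : Euc N →L[ℝ] Euc N) = _ := h
    rw [h2]
    simp
  have hsmul : ∀ (t : ℝ) (L : Euc N →L[ℝ] Euc N),
      ContinuousLinearMap.det (t • L) = t ^ N * ContinuousLinearMap.det L := by
    intro t L
    simp [ContinuousLinearMap.det, LinearMap.det_smul]
  rw [hsmul, abs_mul, hdet, mul_one, dist_zero_right, abs_of_nonneg (by positivity), ← pow_mul,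
    one_div, inv_pow, Real.rpow_neg hz'.le, ← Real.rpow_natCast]
  push_cast
  rfl

lemma quasi_kinv {N : ℕ} (hN : 3 ≤ N) :
    Measure.QuasiMeasurePreserving (kinv N) volume volume := by
  refine ⟨measurable_kinv N, Measure.AbsolutelyContinuous.mk fun S hS h0 => ?_⟩
  rw [Measure.map_apply (measurable_kinv N) hS,
    ← lintegral_indicator_one (measurable_kinv N hS), lintegral_kinv hN]
  refine lintegral_eq_zero_of_ae_eq_zero ?_
  have : ∀ᵐ z : Euc N, z ∉ S := measure_eq_zero_iff_ae_notMem.1 h0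
  filter_upwards [this] with z hz
  have : kinv N z ∉ kinv N ⁻¹' S := by simpa [kinv_kinv] using hz
  simp [Set.indicator_of_notMem this]

/-! ### The integral equation -/

lemma fundSol_nonneg {N : ℕ} (hN : 3 ≤ N) (x : Euc N) : 0 ≤ fundSol N x := by
  have : (3 : ℝ) ≤ N := by exact_mod_cast hN
  have h2 : (0 : ℝ) ≤ (N : ℝ) - 2 := by linarith
  unfold fundSol
  positivity

/-- The conformal covariance of the fundamental solution. -/
lemma fundSol_kinv {N : ℕ} {x y : Euc N} (hx : x ≠ 0) (hy : y ≠ 0) :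
    fundSol N (kinv N x - kinv N y)
      = ‖x‖ ^ ((N : ℝ) - 2) * ‖y‖ ^ ((N : ℝ) - 2) * fundSol N (x - y) := by
  unfold fundSol
  have e : (2 : ℝ) - N = -((N : ℝ) - 2) := by ring
  rw [norm_kinv_sub hx hy, Real.mul_rpow (by positivity) (norm_nonneg _),
    Real.inv_rpow (by positivity), e, ← Real.rpow_neg (by positivity), neg_neg,
    Real.mul_rpow (norm_nonneg _) (norm_nonneg _)]
  ring

/-- The nonlinear term transforms covariantly: the Jacobian `|z|^{-2N}`, the factor `|z|^{N-2}`
from the kernel and the factor `|z|^{(N-2)p}` from `u^p` combine to the weight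
`|z|^{(N-2)(p-1)-4}`. -/
lemma gammaConv_kinv {N : ℕ} (hN : 3 ≤ N) (α u : Euc N → ℝ) (p : ℝ)
    (hu : ∀ᵐ x, 0 < u x) {x : Euc N} (hx : x ≠ 0) :
    ENNReal.ofReal (‖x‖ ^ (-(N : ℝ) + 2)) * GammaConvFn N (fun y => α y * u y ^ p) (kinv N x)
      = GammaConvFn N
            (fun y => (‖y‖ ^ (((N : ℝ) - 2) * (p - 1) - 4) * α ((‖y‖ ^ 2)⁻¹ • y)) *
              kelvin N u y ^ p) x := by
  unfold GammaConvFn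
  rw [lintegral_kinv hN, ← lintegral_const_mul' _ _ ENNReal.ofReal_ne_top]
  refine lintegral_congr_ae ?_
  filter_upwards [ae_ne_zero hN, (quasi_kinv hN).ae hu] with z hz huz
  have hx' : 0 < ‖x‖ := norm_pos_iff.2 hx
  have hz' : 0 < ‖z‖ := norm_pos_iff.2 hz
  rw [← ENNReal.ofReal_mul (fundSol_nonneg hN _), ← ENNReal.ofReal_mul (by positivity),
    ← ENNReal.ofReal_mul (by positivity), ← ENNReal.ofReal_mul (fundSol_nonneg hN _)]
  congr 1
  rw [fundSol_kinv hx hz, kelvin, ← kinv, Real.mul_rpow (by positivity) huz.le,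
    ← Real.rpow_mul hz'.le]
  have h1 : ‖x‖ ^ (-(N : ℝ) + 2) * ‖x‖ ^ ((N : ℝ) - 2) = 1 := by
    rw [← Real.rpow_add hx']
    simp
  have h2 : ‖z‖ ^ (-(2 * (N : ℝ))) * ‖z‖ ^ ((N : ℝ) - 2)
      = ‖z‖ ^ (((N : ℝ) - 2) * (p - 1) - 4) * ‖z‖ ^ ((-(N : ℝ) + 2) * p) := by
    rw [← Real.rpow_add hz', ← Real.rpow_add hz']
    congr 1
    ring
  calc _ = (‖x‖ ^ (-(N : ℝ) + 2) * ‖x‖ ^ ((N : ℝ) - 2)) *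
        (‖z‖ ^ (-(2 * (N : ℝ))) * ‖z‖ ^ ((N : ℝ) - 2)) *
        (fundSol N (x - z) * (α (kinv N z) * u (kinv N z) ^ p)) := by ring
    _ = _ := by rw [h1, h2]; ring

lemma kelvin_equation {N : ℕ} (hN : 3 ≤ N) (α u : Euc N → ℝ) (p : ℝ) (μ : Measure (Euc N))
    {κ : ℝ} (hκ : 0 < κ) (hu : IsSolution N α p μ κ u) :
    ∀ᵐ x, ENNReal.ofReal (kelvin N u x)
        = GammaConvFn N
            (fun y => (‖y‖ ^ (((N : ℝ) - 2) * (p - 1) - 4) * α ((‖y‖ ^ 2)⁻¹ • y)) *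
              kelvin N u y ^ p) x +
          ENNReal.ofReal κ *
            ENNReal.ofReal (kelvin N (fun z => (GammaConvMeas N μ z).toReal) x) := by
  obtain ⟨-, hpos, heq⟩ := hu
  filter_upwards [ae_ne_zero hN, (quasi_kinv hN).ae heq] with x hx hxeq
  -- `Γ * μ` is finite wherever the integral equation holds, so `toReal` loses nothing there.
  have hfin : GammaConvMeas N μ (kinv N x) ≠ ⊤ := by
    intro h
    rw [h, ENNReal.mul_top (by simpa using hκ), add_top] at hxeq
    exact ENNReal.ofReal_ne_top hxeq
  rw [← gammaConv_kinv hN α u p hpos hx]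
  unfold kelvin
  rw [← kinv, ENNReal.ofReal_mul (by positivity), ENNReal.ofReal_mul (by positivity), hxeq,
    ENNReal.ofReal_toReal hfin]
  ring

/-! ### The weighted norms -/

/-- Up to a null set, the inversion maps `A(0,R)` onto `A(0,2/R)`, with Jacobian at most
`R^{2N}` on the latter. -/
lemma map_kinv_restrict_le {N : ℕ} (hN : 3 ≤ N) {R : ℝ} (hR : 0 < R) :
    Measure.map (kinv N) (volume.restrict (annulusA N R))
      ≤ ENNReal.ofReal (R ^ (2 * (N : ℝ))) • volume.restrict (annulusA N (2 / R)) := by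
  have : Nonempty (Fin N) := ⟨⟨0, by omega⟩⟩
  have hA : ∀ T, MeasurableSet (annulusA N T) := fun T => measurableSet_ball.diff measurableSet_ball
  refine Measure.le_iff.2 fun S hS => ?_
  rw [Measure.map_apply (measurable_kinv N) hS, Measure.smul_apply,
    Measure.restrict_apply (measurable_kinv N hS), Measure.restrict_apply hS,
    ← lintegral_indicator_one ((measurable_kinv N hS).inter (hA R)), lintegral_kinv hN,
    smul_eq_mul, ← lintegral_indicator_one (hS.inter (hA (2 / R))),
    ← lintegral_const_mul' _ _ ENNReal.ofReal_ne_top]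
  refine lintegral_mono_ae ?_
  -- The inverse of `A(0,R)` is `1/R < |z| ≤ 2/R`, so the outer sphere is discarded.
  have hsph : ∀ᵐ z : Euc N, z ∉ sphere (0 : Euc N) (2 / R) :=
    measure_eq_zero_iff_ae_notMem.1 (Measure.addHaar_sphere _ _ _)
  filter_upwards [ae_ne_zero hN, hsph] with z hz hzs
  have hz' : 0 < ‖z‖ := norm_pos_iff.2 hz
  by_cases hmem : kinv N z ∈ kinv N ⁻¹' S ∩ annulusA N R
  · have hzS : z ∈ S := by simpa [kinv_kinv] using hmem.1
    have h2 := hmem.2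
    simp only [annulusA, Set.mem_sdiff, mem_ball, dist_zero_right, norm_kinv, not_lt] at h2
    simp only [mem_sphere, dist_zero_right] at hzs
    have hlow : R⁻¹ < ‖z‖ := inv_lt_of_inv_lt₀ hz' h2.1
    have hup : ‖z‖ ≤ 2 / R := by
      have := inv_anti₀ (by positivity) h2.2
      rwa [inv_inv, inv_div] at this
    have hzA : z ∈ annulusA N (2 / R) := by
      simp only [annulusA, Set.mem_sdiff, mem_ball, dist_zero_right, not_lt]
      refine ⟨lt_of_le_of_ne hup hzs, ?_⟩
      have : 2 / R / 2 = R⁻¹ := by field_simp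
      rw [this]
      exact hlow.le
    have hzm : z ∈ S ∩ annulusA N (2 / R) := ⟨hzS, hzA⟩
    rw [Set.indicator_of_mem hmem, Set.indicator_of_mem hzm]
    simp only [Pi.one_apply, mul_one]
    refine ENNReal.ofReal_le_ofReal ?_
    rw [Real.rpow_neg hz'.le, ← Real.inv_rpow hz'.le]
    exact Real.rpow_le_rpow (by positivity) h2.1.le (by positivity)
  · rw [Set.indicator_of_notMem hmem]
    simp

lemma eLpNorm_kelvin_le {N : ℕ} (hN : 3 ≤ N) (r : ℝ≥0∞) {f : Euc N → ℝ}
    (hf : AEStronglyMeasurable f volume) {R : ℝ} (hR : 0 < R) :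
    eLpNorm (kelvin N f) r (volume.restrict (annulusA N R)) ≤
      ENNReal.ofReal ((R / 2) ^ (-(N : ℝ) + 2)) *
        (ENNReal.ofReal ((R ^ (2 * (N : ℝ))) ^ (1 / r).toReal) *
          eLpNorm f r (volume.restrict (annulusA N (2 / R)))) := by
  have hN' : (3 : ℝ) ≤ N := by exact_mod_cast hN
  have hA : MeasurableSet (annulusA N R) := measurableSet_ball.diff measurableSet_ball
  have h1 : eLpNorm (kelvin N f) r (volume.restrict (annulusA N R)) ≤
      ENNReal.ofReal ((R / 2) ^ (-(N : ℝ) + 2)) *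
        eLpNorm (f ∘ kinv N) r (volume.restrict (annulusA N R)) := by
    refine eLpNorm_le_mul_eLpNorm_of_ae_le_mul ?_ r
    filter_upwards [ae_restrict_mem hA] with x hx
    simp only [annulusA, Set.mem_sdiff, mem_ball, dist_zero_right, not_lt] at hx
    rw [kelvin, norm_mul, Real.norm_of_nonneg (by positivity : 0 ≤ ‖x‖ ^ (-(N : ℝ) + 2))]
    exact mul_le_mul_of_nonneg_right
      (Real.rpow_le_rpow_of_nonpos (by positivity) hx.2 (by linarith)) (norm_nonneg _)
  refine h1.trans (mul_le_mul_right ?_ _)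
  have hle := map_kinv_restrict_le hN hR
  have hpos : 0 < R ^ (2 * (N : ℝ)) := by positivity
  rw [← eLpNorm_map_measure ?_ (measurable_kinv N).aemeasurable]
  · refine (eLpNorm_mono_measure f hle).trans ?_
    rw [eLpNorm_smul_measure_of_ne_zero (by simpa using hpos), smul_eq_mul,
      ENNReal.ofReal_rpow_of_pos hpos]
  · exact (hf.restrict.smul_measure _).mono_measure hle

/-- The weights of the dual exponents are comparable under `R ↦ 2/R`, up to `R^{N-2}`. -/
lemma omegaWt_dual (n c d : ℝ) :
    ∃ K : ℝ, 0 ≤ K ∧ ∀ R : ℝ, 0 < R →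
      omegaWt c d (2 / R) ≤ K * (R ^ (n - 2) * omegaWt (-n + 2 - d) (-n + 2 - c) R) := by
  refine ⟨2 ^ d + 2 ^ c + 2 ^ d * 2 ^ |c - d|, by positivity, fun R hR => ?_⟩
  have hk : ∀ e : ℝ, R ^ (n - 2) * R ^ (-n + 2 - e) = R ^ (-e) := by
    intro e
    rw [← Real.rpow_add hR]
    congr 1
    ring
  have hdiv : ∀ e : ℝ, (2 / R) ^ e = 2 ^ e * R ^ (-e) := by
    intro e
    rw [Real.div_rpow (by norm_num) hR.le, Real.rpow_neg hR.le, div_eq_mul_inv]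
  have h1 : (0 : ℝ) < 2 ^ d := by positivity
  have h2 : (0 : ℝ) < 2 ^ c := by positivity
  have h3 : (0 : ℝ) < 2 ^ d * 2 ^ |c - d| := by positivity
  unfold omegaWt
  by_cases hR1 : R ≤ 1
  · have : ¬ 2 / R ≤ 1 := by
      rw [not_le, lt_div_iff₀ hR]
      linarith
    rw [if_neg this, if_pos hR1, hk, hdiv]
    exact mul_le_mul_of_nonneg_right (by linarith) (by positivity)
  · rw [if_neg hR1, hk]
    by_cases hR2 : 2 / R ≤ 1
    · rw [if_pos hR2, hdiv]
      exact mul_le_mul_of_nonneg_right (by linarith) (by positivity)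
    · rw [if_neg hR2, hdiv]
      have hRlt : R < 2 := by
        rw [not_le, lt_div_iff₀ hR] at hR2
        linarith
      have e : R ^ (-d) = R ^ (c - d) * R ^ (-c) := by
        rw [← Real.rpow_add hR]
        congr 1
        ring
      have hb : R ^ (c - d) ≤ 2 ^ |c - d| :=
        (Real.rpow_le_rpow_of_exponent_le (not_le.1 hR1).le (le_abs_self _)).trans
          (Real.rpow_le_rpow hR.le hRlt.le (abs_nonneg _))
      rw [e, ← mul_assoc]
      refine mul_le_mul_of_nonneg_right ?_ (by positivity)
      have := mul_le_mul_of_nonneg_left hb h1.le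
      linarith

lemma memW_kelvin {N : ℕ} (hN : 3 ≤ N) (r : ℝ≥0∞) (c d : ℝ) {f : Euc N → ℝ}
    (hf : MemW N r c d f) :
    MemW N r (-(N : ℝ) + 2 - d) (-(N : ℝ) + 2 - c) (kelvin N f) := by
  obtain ⟨hfm, hfn⟩ := hf
  refine ⟨?_, ?_⟩
  · have h1 : AEStronglyMeasurable (fun x : Euc N => ‖x‖ ^ (-(N : ℝ) + 2)) volume :=
      (by fun_prop : Measurable _).aestronglyMeasurable
    exact h1.mul (hfm.comp_quasiMeasurePreserving (quasi_kinv hN))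
  obtain ⟨K, hK, hw⟩ := omegaWt_dual N c d
  set e : ℝ := (1 / r).toReal with he
  have hs : (N : ℝ) / r.toReal = N * e := by
    rw [he, one_div, ENNReal.toReal_inv, div_eq_mul_inv]
  set K' : ℝ := K * 2 ^ ((N : ℝ) - 2) * 2 ^ ((N : ℝ) * e) with hK'
  have hwpos : ∀ β γ R : ℝ, 0 < R → 0 < omegaWt β γ R := by
    intro β γ R hR
    unfold omegaWt
    split_ifs <;> positivity
  refine lt_of_le_of_lt (b := ENNReal.ofReal K' * wNorm N r c d f) ?_
    (ENNReal.mul_lt_top ENNReal.ofReal_lt_top hfn)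
  refine iSup_le fun ⟨R, hR⟩ => ?_
  have hT : 0 < 2 / R := by positivity
  have hsup : ENNReal.ofReal (((2 / R) ^ (-((N : ℝ) / r.toReal))) / omegaWt c d (2 / R)) *
      eLpNorm f r (volume.restrict (annulusA N (2 / R))) ≤ wNorm N r c d f :=
    le_iSup (fun R : {R : ℝ // 0 < R} =>
      ENNReal.ofReal (((R : ℝ) ^ (-((N : ℝ) / r.toReal))) / omegaWt c d (R : ℝ)) *
      eLpNorm f r (volume.restrict (annulusA N (R : ℝ)))) ⟨2 / R, hT⟩
  refine le_trans ?_ (mul_le_mul_right hsup _)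
  refine (mul_le_mul_right (eLpNorm_kelvin_le hN r hfm hR) _).trans ?_
  have hω := hwpos (-(N : ℝ) + 2 - d) (-(N : ℝ) + 2 - c) R hR
  have hωT := hwpos c d (2 / R) hT
  have hreal : R ^ (-((N : ℝ) / r.toReal)) / omegaWt (-(N : ℝ) + 2 - d) (-(N : ℝ) + 2 - c) R *
      ((R / 2) ^ (-(N : ℝ) + 2) * (R ^ (2 * (N : ℝ))) ^ e)
      ≤ K' * ((2 / R) ^ (-((N : ℝ) / r.toReal)) / omegaWt c d (2 / R)) := by
    have hwR := hw R hR
    rw [hs]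
    set W := omegaWt (-(N : ℝ) + 2 - d) (-(N : ℝ) + 2 - c) R
    set V := omegaWt c d (2 / R)
    have e1 : R ^ (-((N : ℝ) * e)) * (R ^ (2 * (N : ℝ))) ^ e = R ^ ((N : ℝ) * e) := by
      rw [← Real.rpow_mul hR.le, ← Real.rpow_add hR]
      congr 1
      ring
    have e2 : (R / 2) ^ (-(N : ℝ) + 2) = 2 ^ ((N : ℝ) - 2) / R ^ ((N : ℝ) - 2) := by
      have : -(N : ℝ) + 2 = -((N : ℝ) - 2) := by ring
      rw [this, Real.rpow_neg (by positivity), ← Real.inv_rpow (by positivity), inv_div,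
        Real.div_rpow (by norm_num) hR.le]
    have e3 : 2 ^ ((N : ℝ) * e) * (2 / R) ^ (-((N : ℝ) * e)) = R ^ ((N : ℝ) * e) := by
      rw [Real.rpow_neg hT.le, Real.div_rpow (by norm_num) hR.le]
      field_simp
    calc R ^ (-((N : ℝ) * e)) / W * ((R / 2) ^ (-(N : ℝ) + 2) * (R ^ (2 * (N : ℝ))) ^ e)
        = (R ^ (-((N : ℝ) * e)) * (R ^ (2 * (N : ℝ))) ^ e) * (R / 2) ^ (-(N : ℝ) + 2) / W := by
          ring
      _ = R ^ ((N : ℝ) * e) * 2 ^ ((N : ℝ) - 2) * (1 / (R ^ ((N : ℝ) - 2) * W)) := by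
          rw [e1, e2]
          field_simp
      _ ≤ R ^ ((N : ℝ) * e) * 2 ^ ((N : ℝ) - 2) * (K / V) := by
          refine mul_le_mul_of_nonneg_left ?_ (by positivity)
          rw [div_le_div_iff₀ (by positivity) hωT]
          linarith
      _ = K' * ((2 / R) ^ (-((N : ℝ) * e)) / V) := by
          rw [← e3, hK']
          ring
  rw [← mul_assoc, ← mul_assoc, ← mul_assoc, ← ENNReal.ofReal_mul (by positivity),
    ← ENNReal.ofReal_mul (by positivity), ← ENNReal.ofReal_mul (by positivity)]
  refine mul_le_mul_left (ENNReal.ofReal_le_ofReal ?_) _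
  rw [mul_assoc]
  exact hreal

/-! ### Growth of the dual coefficient -/

lemma tendsto_kinv_zero (N : ℕ) :
    Tendsto (kinv N) (nhdsWithin 0 {(0 : Euc N)}ᶜ) (comap (fun x : Euc N => ‖x‖) atTop) := by
  rw [tendsto_comap_iff]
  have : (fun x : Euc N => ‖x‖) ∘ kinv N = fun x => ‖x‖⁻¹ := by
    ext x
    exact norm_kinv N x
  rw [this]
  exact tendsto_norm_nhdsNE_zero.inv_tendsto_nhdsGT_zero

lemma tendsto_kinv_infty (N : ℕ) :
    Tendsto (kinv N) (comap (fun x : Euc N => ‖x‖) atTop) (nhdsWithin 0 {(0 : Euc N)}ᶜ) := by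
  have ht : Tendsto (fun x : Euc N => ‖x‖) (comap (fun x : Euc N => ‖x‖) atTop) atTop :=
    tendsto_comap
  refine tendsto_nhdsWithin_iff.2 ⟨?_, ?_⟩
  · rw [tendsto_zero_iff_norm_tendsto_zero]
    simp only [norm_kinv]
    exact ht.inv_tendsto_atTop
  · filter_upwards [ht.eventually_gt_atTop 0] with x hx
    exact kinv_ne_zero (norm_pos_iff.1 hx)

lemma dual_weight {N : ℕ} (k b t : ℝ) {x : Euc N} (hx : x ≠ 0) :
    ‖x‖ ^ (-(k - b)) * (‖x‖ ^ k * t) = ‖kinv N x‖ ^ (-b) * t := by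
  have hx' : 0 < ‖x‖ := norm_pos_iff.2 hx
  rw [norm_kinv, ← mul_assoc, ← Real.rpow_add hx', Real.inv_rpow hx'.le, ← Real.rpow_neg hx'.le]
  congr 2
  ring

/-- **Lemma 4.1**: under the standing assumptions (H), the Kelvin transformation `u^♯` of a
solution `u` of `(P_κ)` solves the dual integral equation with coefficient
`β(x) = |x|^{(N-2)(p-1)-4} α(x/|x|²)`, and the dual data satisfy the analogous
structural conditions with `a^♯ = (N-2)(p-1)-4-b`, `b^♯ = (N-2)(p-1)-4-a`,
`c^♯ = -N+2-d`, `d^♯ = -N+2-c`. -/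
theorem kelvin_transform_dual_problem
    (N : ℕ) (hN : 3 ≤ N)
    (α : Euc N → ℝ) (a b : ℝ)
    (hα_cont : ContinuousOn α {(0 : Euc N)}ᶜ)
    (hα_pos : ∀ x : Euc N, x ≠ 0 → 0 < α x)
    (ha : -2 < a)
    (hα0 : ∃ C : ℝ, ∀ᶠ x : Euc N in nhdsWithin 0 {(0 : Euc N)}ᶜ, ‖x‖ ^ (-a) * α x ≤ C)
    (hαinf : ∃ C : ℝ, ∀ᶠ x : Euc N in comap (fun x : Euc N => ‖x‖) atTop, ‖x‖ ^ (-b) * α x ≤ C)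
    (p : ℝ) (r : ℝ≥0∞) (c d : ℝ)
    (hp1 : 1 < p) (hpr : ENNReal.ofReal p < r)
    (hpb : ((N : ℝ) + b) / ((N : ℝ) - 2) < p)
    (hrN : ENNReal.ofReal ((N : ℝ) * (p - 1) / 2) < r)
    (hc : -(a + 2) / (p - 1) < c)
    (hd : d < -(b + 2) / (p - 1))
    (μ : Measure (Euc N)) [IsLocallyFiniteMeasure μ] (hμ : μ ≠ 0)
    (hΓμ : MemW N r c d (fun x => (GammaConvMeas N μ x).toReal))
    (κ : ℝ) (hκ : 0 < κ) (u : Euc N → ℝ) (hu : IsSolution N α p μ κ u) :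
    (∀ᵐ x, ENNReal.ofReal (kelvin N u x)
        = GammaConvFn N
            (fun y => (‖y‖ ^ (((N : ℝ) - 2) * (p - 1) - 4) * α ((‖y‖ ^ 2)⁻¹ • y)) *
              kelvin N u y ^ p) x +
          ENNReal.ofReal κ *
            ENNReal.ofReal (kelvin N (fun z => (GammaConvMeas N μ z).toReal) x)) ∧
    (∃ C : ℝ, ∀ᶠ x : Euc N in nhdsWithin 0 {(0 : Euc N)}ᶜ,
      ‖x‖ ^ (-(((N : ℝ) - 2) * (p - 1) - 4 - b)) *
        (‖x‖ ^ (((N : ℝ) - 2) * (p - 1) - 4) * α ((‖x‖ ^ 2)⁻¹ • x)) ≤ C) ∧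
    (∃ C : ℝ, ∀ᶠ x : Euc N in comap (fun x : Euc N => ‖x‖) atTop,
      ‖x‖ ^ (-(((N : ℝ) - 2) * (p - 1) - 4 - a)) *
        (‖x‖ ^ (((N : ℝ) - 2) * (p - 1) - 4) * α ((‖x‖ ^ 2)⁻¹ • x)) ≤ C) ∧
    MemW N r (-(N : ℝ) + 2 - d) (-(N : ℝ) + 2 - c)
      (kelvin N (fun z => (GammaConvMeas N μ z).toReal)) ∧
    (-2 < ((N : ℝ) - 2) * (p - 1) - 4 - b) ∧
    ((N : ℝ) + (((N : ℝ) - 2) * (p - 1) - 4 - a)) / ((N : ℝ) - 2) < p ∧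
    (-((((N : ℝ) - 2) * (p - 1) - 4 - b) + 2) / (p - 1) < -(N : ℝ) + 2 - d) ∧
    (-(N : ℝ) + 2 - c < -((((N : ℝ) - 2) * (p - 1) - 4 - a) + 2) / (p - 1)) := by
  have hN' : (0 : ℝ) < (N : ℝ) - 2 := by
    have : (3 : ℝ) ≤ N := by exact_mod_cast hN
    linarith
  have hp : 0 < p - 1 := by linarith
  refine ⟨kelvin_equation hN α u p μ hκ hu, ?_, ?_, memW_kelvin hN r c d hΓμ, ?_, ?_, ?_, ?_⟩
  · obtain ⟨C, hC⟩ := hαinf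
    refine ⟨C, ?_⟩
    filter_upwards [(tendsto_kinv_zero N).eventually hC, self_mem_nhdsWithin] with x hx hx0
    rw [dual_weight _ _ _ hx0]
    exact hx
  · obtain ⟨C, hC⟩ := hα0
    refine ⟨C, ?_⟩
    have ht : Tendsto (fun x : Euc N => ‖x‖) (comap (fun x : Euc N => ‖x‖) atTop) atTop :=
      tendsto_comap
    filter_upwards [(tendsto_kinv_infty N).eventually hC, ht.eventually_gt_atTop 0] with x hx hx0
    rw [dual_weight _ _ _ (norm_pos_iff.1 hx0)]
    exact hx
  · rw [div_lt_iff₀ hN'] at hpb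
    linarith
  · rw [div_lt_iff₀ hN']
    linarith
  · rw [lt_div_iff₀ hp] at hd
    rw [div_lt_iff₀ hp]
    linarith
  · rw [div_lt_iff₀ hp] at hc
    rw [lt_div_iff₀ hp]
    linarith
end
end

section
/- Under the standing assumptions (H), let 0 < κ < κ', suppose problem (P_{κ'}) possesses a solution, and let u^κ be the minimal solution of problem (P_κ). Then for every smooth compactly supported function ψ : ℝ^N → ℝ one has ∫_{ℝ^N} p α(x) u^κ(x)^{p-1} ψ(x)² dx ≤ ∫_{ℝ^N} |∇ψ(x)|² dx. -/
/-! The inequality is a Hardy inequality for the potential `V = p α u ^ (p - 1)`, obtained from a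
positive supersolution of the linearised problem.

Let `w` be a solution with parameter `κ'` and let `u` be the minimal solution with parameter `κ`.
Monotone iteration from `0` produces a solution with parameter `κ` lying below `w`
(`exists_solution_le`), so `u ≤ w` by minimality. Put `z = w - u`. By convexity of `s ↦ s ^ p`
(`rpow_tangent`), `α w ^ p ≥ α u ^ p + V z`; subtracting the two integral equations gives
`z ≥ Γ * (V z) + (κ' - κ) Γ * μ`. In particular `z > 0` and `Γ * (V z) ≤ z` almost everywhere.

It remains to see that `V ≥ 0`, `z > 0` and `Γ * (V z) ≤ z` imply `∫ V ψ² ≤ ∫ |∇ψ|²`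
(`hardy_supersolution`). Formally this is Picone's inequality `∫ (-Δv) ψ² / v ≤ ∫ |∇ψ|²` for
`v = Γ * (V z)`, since `-Δv = V z` and `v ≤ z`. As `V z` has no regularity, it is
approached in three steps, with a shift `δ > 0` of the denominator and Fatou's lemma at each of them.

* For a smooth compactly supported density `φ`, replace `Γ` by a multiple of the smooth kernel
  `(|x|² + ε) ^ (-(N - 2) / 2)`, which lies below `Γ`. Its negative Laplacian is a multiple of
  `ε (|x|² + ε) ^ (-(N + 2) / 2)` (`regKer_laplacian`), an approximate identity (`cv_tendsto`).
  Picone's inequality for the regularised potential (`picone_reg`) gives, as `ε → 0`,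
  `∫ φ ψ² / (Γ * φ + δ) ≤ ∫ |∇ψ|²` (`hardy_smooth`).
* Mollification extends this to bounded densities of bounded support (`hardy_bounded`).
* Truncation of `V z`, with `δ → 0`, gives the result, because the potential of a truncated density
  is at most `z`.
-/

open MeasureTheory Metric ENNReal Filter

noncomputable section

/-! ### Picone's inequality -/

/-- The `i`-th standard basis vector of `ℝ^N`. -/
def bvec (N : ℕ) (i : Fin N) : Euc N := EuclideanSpace.single i 1

lemma norm_gradient_sq {N : ℕ} (ψ : Euc N → ℝ) (x : Euc N) :
    ‖gradient ψ x‖ ^ 2 = ∑ i, (fderiv ℝ ψ x (bvec N i)) ^ 2 := by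
  rw [EuclideanSpace.norm_sq_eq]
  refine Finset.sum_congr rfl fun i _ => ?_
  have : fderiv ℝ ψ x (bvec N i) = inner ℝ (gradient ψ x) (bvec N i) := by
    simp [gradient]
  rw [this, bvec, EuclideanSpace.inner_single_right]
  simp

/-- Picone's inequality in one direction, integrated by parts: the pointwise bound
`2 s t - s ^ 2 ≤ t ^ 2` with `s = ψ ∂v / v`, `t = ∂ψ`. -/
lemma picone_dir {N : ℕ} {e : Euc N} {v g l ψ : Euc N → ℝ} (hv : ContDiff ℝ 1 v)
    (hvpos : ∀ x, 0 < v x) (hg : ∀ x, fderiv ℝ v x e = g x) (hg1 : ContDiff ℝ 1 g)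
    (hl : ∀ x, fderiv ℝ g x e = l x) (hψ : ContDiff ℝ 1 ψ) (hψc : HasCompactSupport ψ) :
    ∫ x, (-l x) * (ψ x ^ 2 / v x) ≤ ∫ x, (fderiv ℝ ψ x e) ^ 2 := by
  have hvne : ∀ x, v x ≠ 0 := fun x => (hvpos x).ne'
  set q : Euc N → ℝ := fun x => ψ x ^ 2 / v x with hq
  have hq1 : ContDiff ℝ 1 q := (hψ.pow 2).div hv hvne
  have hqc : HasCompactSupport q := by
    refine hψc.mono fun x hx => ?_
    simp only [hq, Function.mem_support] at hx ⊢
    intro h; apply hx; simp [h]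
  have hqd : ∀ x, fderiv ℝ q x e
      = 2 * (ψ x * fderiv ℝ ψ x e) / v x - ψ x ^ 2 * g x / v x ^ 2 := by
    intro x
    have h1 := (hψ.differentiable one_ne_zero x).hasFDerivAt
    have h2 := (hv.differentiable one_ne_zero x).hasFDerivAt
    have h3 := (h1.pow 2).mul ((hasDerivAt_inv (hvne x)).comp_hasFDerivAt x h2)
    have h4 : q = (fun x => ψ x ^ 2) * (fun x => (v x)⁻¹) := by
      ext y; simp [hq, div_eq_mul_inv]
    rw [h4]
    refine (congrArg (fun L : Euc N →L[ℝ] ℝ => L e) h3.fderiv).trans ?_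
    simp [hg]
    field_simp
    ring
  have hlc : Continuous l :=
    ((hg1.continuous_fderiv one_ne_zero).clm_apply continuous_const).congr hl
  have hψd : Continuous fun x => fderiv ℝ ψ x e :=
    (hψ.continuous_fderiv one_ne_zero).clm_apply continuous_const
  have hqdc : Continuous fun x => fderiv ℝ q x e :=
    (hq1.continuous_fderiv one_ne_zero).clm_apply continuous_const
  have hψdc : HasCompactSupport fun x => fderiv ℝ ψ x e := hψc.fderiv_apply ℝ e
  have hqdcc : HasCompactSupport fun x => fderiv ℝ q x e := hqc.fderiv_apply ℝ e
  have ibp := integral_mul_fderiv_eq_neg_fderiv_mul_of_integrable (μ := (volume : Measure (Euc N)))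
    (f := g) (g := q) (v := e)
    (by
      simp only [hl]
      exact (hlc.mul hq1.continuous).integrable_of_hasCompactSupport hqc.mul_left)
    ((hg1.continuous.mul hqdc).integrable_of_hasCompactSupport hqdcc.mul_left)
    ((hg1.continuous.mul hq1.continuous).integrable_of_hasCompactSupport hqc.mul_left)
    (fun x _ => hg1.differentiable one_ne_zero x)
    (fun x _ => hq1.differentiable one_ne_zero x)
  simp only [hl] at ibp
  have e1 : ∫ x, (-l x) * (ψ x ^ 2 / v x) = ∫ x, g x * fderiv ℝ q x e := by
    rw [ibp, ← integral_neg]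
    simp [hq]
  rw [e1]
  refine integral_mono ?_ ?_ ?_
  · exact (hg1.continuous.mul hqdc).integrable_of_hasCompactSupport hqdcc.mul_left
  · refine (hψd.pow 2).integrable_of_hasCompactSupport ?_
    refine hψdc.mono fun x hx => ?_
    simp only [Function.mem_support] at hx ⊢
    intro h; apply hx; simp [h]
  · intro x
    simp only [hqd]
    have hv' := hvne x
    have : g x * (2 * (ψ x * fderiv ℝ ψ x e) / v x - ψ x ^ 2 * g x / v x ^ 2)
      = 2 * (ψ x * g x / v x) * fderiv ℝ ψ x e - (ψ x * g x / v x) ^ 2 := by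
      field_simp
    rw [this]
    nlinarith [sq_nonneg (ψ x * g x / v x - fderiv ℝ ψ x e)]

/-- Picone's inequality for a positive `v` with `∂ᵢ v = gᵢ` and `∂ᵢ gᵢ = lᵢ`:
`∫ (-Δv) ψ² / v ≤ ∫ |∇ψ|²`. Passing `g` and `l` as data avoids second derivatives of `v`. -/
lemma picone_sum {N : ℕ} {v : Euc N → ℝ} {g l : Fin N → Euc N → ℝ} {ψ : Euc N → ℝ}
    (hv : ContDiff ℝ 1 v)
    (hvpos : ∀ x, 0 < v x) (hg : ∀ i x, fderiv ℝ v x (bvec N i) = g i x)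
    (hg1 : ∀ i, ContDiff ℝ 1 (g i))
    (hl : ∀ i x, fderiv ℝ (g i) x (bvec N i) = l i x)
    (hψ : ContDiff ℝ 1 ψ) (hψc : HasCompactSupport ψ) :
    ∫ x, (-∑ i, l i x) * (ψ x ^ 2 / v x) ≤ ∫ x, ‖gradient ψ x‖ ^ 2 := by
  have hψd : ∀ i, Continuous fun x => fderiv ℝ ψ x (bvec N i) := fun i =>
    (hψ.continuous_fderiv one_ne_zero).clm_apply continuous_const
  have hlc : ∀ i, Continuous (l i) := fun i =>
    ((hg1 i).continuous_fderiv one_ne_zero |>.clm_apply continuous_const).congr (hl i)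
  simp only [norm_gradient_sq, neg_mul, Finset.sum_mul, ← Finset.sum_neg_distrib]
  rw [integral_finsetSum, integral_finsetSum]
  · refine Finset.sum_le_sum fun i _ => ?_
    simpa using picone_dir hv hvpos (hg i) (hg1 i) (hl i) hψ hψc
  · intro i _
    refine ((hψd i).pow 2).integrable_of_hasCompactSupport ?_
    refine (hψc.fderiv_apply ℝ (bvec N i)).mono fun x hx => ?_
    simp only [Function.mem_support] at hx ⊢
    intro h; apply hx; simp [h]
  · intro i _
    have : Continuous fun x => -(l i x * (ψ x ^ 2 / v x)) :=
      ((hlc i).mul ((hψ.continuous.pow 2).div hv.continuous fun x => (hvpos x).ne')).neg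
    refine this.integrable_of_hasCompactSupport ?_
    refine hψc.mono fun x hx => ?_
    simp only [Function.mem_support] at hx ⊢
    intro h; apply hx; simp [h]

/-! ### Regularised Newtonian kernel -/

/-- Convolution of real functions on `ℝ^N`, `cv F φ x = ∫ F(t) φ(x - t) dt`. -/
def cv {N : ℕ} (F φ : Euc N → ℝ) : Euc N → ℝ :=
  convolution F φ (ContinuousLinearMap.mul ℝ ℝ) volume

lemma cv_apply {N : ℕ} (F φ : Euc N → ℝ) (x : Euc N) : cv F φ x = ∫ t, F t * φ (x - t) := rfl

lemma hasCompactSupport_comp_sub {N : ℕ} {φ : Euc N → ℝ} (hφc : HasCompactSupport φ) (x : Euc N) :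
    HasCompactSupport fun t => φ (x - t) :=
  hφc.comp_homeomorph (Homeomorph.subLeft x)

lemma cv_integrable {N : ℕ} {F φ : Euc N → ℝ} (hF : Continuous F) (hφ : Continuous φ)
    (hφc : HasCompactSupport φ) (x : Euc N) : Integrable fun t => F t * φ (x - t) := by
  have h := hasCompactSupport_comp_sub hφc x
  exact (hF.mul (hφ.comp (continuous_const.sub continuous_id))).integrable_of_hasCompactSupport
    h.mul_left

lemma cv_contDiff {N : ℕ} {F φ : Euc N → ℝ} (hF : Continuous F) (hφ : ContDiff ℝ 1 φ)
    (hφc : HasCompactSupport φ) : ContDiff ℝ 1 (cv F φ) :=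
  hφc.contDiff_convolution_right (n := 1) _ hF.locallyIntegrable hφ

/-- The derivative of a convolution may be put on the factor without compact support. -/
lemma cv_fderiv {N : ℕ} {F φ : Euc N → ℝ} (hF : ContDiff ℝ 1 F) (hφ : ContDiff ℝ 1 φ)
    (hφc : HasCompactSupport φ) (x e : Euc N) :
    fderiv ℝ (cv F φ) x e = cv (fun y => fderiv ℝ F y e) φ x := by
  have hd := hφc.hasFDerivAt_convolution_right (ContinuousLinearMap.mul ℝ ℝ)
    (μ := (volume : Measure (Euc N))) hF.continuous.locallyIntegrable hφ x
  have h1 : fderiv ℝ (cv F φ) x e = ∫ t, F t * fderiv ℝ φ (x - t) e := by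
    have : fderiv ℝ (cv F φ) x = _ := hd.fderiv
    rw [this, convolution_precompR_apply _ hF.continuous.locallyIntegrable
      (hφc.fderiv ℝ) (hφ.continuous_fderiv one_ne_zero)]
    rfl
  have hq : ContDiff ℝ 1 fun t => φ (x - t) := hφ.comp (contDiff_const.sub contDiff_id)
  have hqc := hasCompactSupport_comp_sub hφc x
  have hqd : ∀ t, fderiv ℝ (fun t => φ (x - t)) t e = - fderiv ℝ φ (x - t) e := by
    intro t
    have h2 := (hφ.differentiable one_ne_zero (x - t)).hasFDerivAt
    have h3 : HasFDerivAt (fun t : Euc N => x - t) (-ContinuousLinearMap.id ℝ (Euc N)) t :=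
      (hasFDerivAt_id t).const_sub x
    have h4 : HasFDerivAt (fun t => φ (x - t)) _ t := h2.comp t h3
    rw [h4.fderiv]; simp
  have hFd : Continuous fun y => fderiv ℝ F y e :=
    (hF.continuous_fderiv one_ne_zero).clm_apply continuous_const
  have hqdc : Continuous fun t => fderiv ℝ (fun t => φ (x - t)) t e :=
    (hq.continuous_fderiv one_ne_zero).clm_apply continuous_const
  have ibp := integral_mul_fderiv_eq_neg_fderiv_mul_of_integrable (μ := (volume : Measure (Euc N)))
    (f := F) (g := fun t => φ (x - t)) (v := e)
    ((hFd.mul hq.continuous).integrable_of_hasCompactSupport hqc.mul_left)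
    ((hF.continuous.mul hqdc).integrable_of_hasCompactSupport (hqc.fderiv_apply ℝ e).mul_left)
    ((hF.continuous.mul hq.continuous).integrable_of_hasCompactSupport hqc.mul_left)
    (fun x _ => hF.differentiable one_ne_zero x)
    (fun x _ => hq.differentiable one_ne_zero x)
  rw [h1, cv_apply]
  simp only [hqd, mul_neg, integral_neg] at ibp
  exact neg_injective ibp

/-- The regularised power `(|x|² + ε)^{-m}`. For `m = (N - 2) / 2` it regularises a multiple of the
fundamental solution; for `m = (N + 2) / 2` it is, up to a factor `ε`, a multiple of its negative
Laplacian. -/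
def regKer {N : ℕ} (m ε : ℝ) (x : Euc N) : ℝ := (‖x‖ ^ 2 + ε) ^ (-m)

lemma regKer_base_pos {N : ℕ} {ε : ℝ} (hε : 0 < ε) (x : Euc N) : 0 < ‖x‖ ^ 2 + ε := by positivity

lemma regKer_pos {N : ℕ} {ε : ℝ} (hε : 0 < ε) (m : ℝ) (x : Euc N) : 0 < regKer m ε x :=
  Real.rpow_pos_of_pos (regKer_base_pos hε x) _

lemma regKer_contDiff {N : ℕ} {ε : ℝ} (hε : 0 < ε) (m : ℝ) :
    ContDiff ℝ 1 (regKer m ε : Euc N → ℝ) := by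
  unfold regKer
  exact ((contDiff_norm_sq ℝ).add contDiff_const).rpow_const_of_ne
    fun x => (regKer_base_pos hε x).ne'

lemma regKer_fderiv {N : ℕ} {ε : ℝ} (hε : 0 < ε) (m : ℝ) (x : Euc N) (i : Fin N) :
    fderiv ℝ (regKer m ε) x (bvec N i) = -(2 * m) * (x i * regKer (m + 1) ε x) := by
  have h1 : HasFDerivAt (fun y : Euc N => ‖y‖ ^ 2 + ε) (2 • (innerSL ℝ x)) x :=
    (hasStrictFDerivAt_norm_sq x).hasFDerivAt.add_const ε
  have h2 := (Real.hasDerivAt_rpow_const (p := -m)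
    (Or.inl (regKer_base_pos hε x).ne')).comp_hasFDerivAt x h1
  have h3 : HasFDerivAt (regKer m ε : Euc N → ℝ) _ x := h2
  rw [h3.fderiv]
  have : inner ℝ x (bvec N i) = x i := by
    rw [bvec, EuclideanSpace.inner_single_right]; simp
  simp [this, regKer]
  rw [show -m - 1 = -1 + -m by ring]
  ring

lemma coord_contDiff {N : ℕ} (i : Fin N) : ContDiff ℝ 1 fun x : Euc N => x i := by
  fun_prop

lemma coord_fderiv {N : ℕ} (i : Fin N) (x : Euc N) :
    fderiv ℝ (fun x : Euc N => x i) x (bvec N i) = 1 := by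
  have : (fun x : Euc N => x i) = (EuclideanSpace.proj i : Euc N →L[ℝ] ℝ) := rfl
  rw [this, ContinuousLinearMap.fderiv]
  simp [bvec]

/-- `-Δ (|x|² + ε)^{-(N-2)/2} = N (N-2) ε (|x|² + ε)^{-(N+2)/2}`. -/
lemma regKer_laplacian {N : ℕ} {ε : ℝ} (hε : 0 < ε) (x : Euc N) :
    -∑ i, fderiv ℝ (fun y : Euc N => -(2 * (((N : ℝ) - 2) / 2)) *
        (y i * regKer (((N : ℝ) - 2) / 2 + 1) ε y)) x (bvec N i)
      = (N : ℝ) * ((N : ℝ) - 2) * ε * regKer (((N : ℝ) + 2) / 2) ε x := by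
  set m : ℝ := ((N : ℝ) - 2) / 2 with hm
  have hd : ∀ i, fderiv ℝ (fun y : Euc N => -(2 * m) *
        (y i * regKer (m + 1) ε y)) x (bvec N i)
      = -(2 * m) * (regKer (m + 1) ε x - 2 * (m + 1) * (x i) ^ 2 * regKer (m + 2) ε x) := by
    intro i
    have h1 := ((coord_contDiff i).differentiable one_ne_zero x).hasFDerivAt
    have h2 := ((regKer_contDiff (N := N) hε (m + 1)).differentiable one_ne_zero x).hasFDerivAt
    have h3 := (h1.mul h2).const_mul (-(2 * m))
    have h4 : HasFDerivAt (fun y : Euc N => -(2 * m) * (y i * regKer (m + 1) ε y)) _ x := h3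
    rw [h4.fderiv]
    have e1 := coord_fderiv i x
    have e2 := regKer_fderiv hε (m + 1) x i
    rw [show m + 1 + 1 = m + 2 by ring] at e2
    simp only [_root_.smul_apply, _root_.add_apply, smul_eq_mul, e1, e2]
    ring
  have hs : ∑ i, (x i) ^ 2 = ‖x‖ ^ 2 := by
    rw [EuclideanSpace.norm_sq_eq]; simp
  have hk : regKer (m + 1) ε x = (‖x‖ ^ 2 + ε) * regKer (m + 2) ε x := by
    unfold regKer
    rw [show -(m + 1) = 1 + -(m + 2) by ring, Real.rpow_add (regKer_base_pos hε x), Real.rpow_one]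
  simp only [hd]
  rw [← Finset.mul_sum, Finset.sum_sub_distrib, ← Finset.sum_mul, ← Finset.mul_sum, hs]
  simp only [Finset.sum_const, Finset.card_univ, Fintype.card_fin, nsmul_eq_mul]
  rw [hk, show ((N : ℝ) + 2) / 2 = m + 2 by rw [hm]; ring]
  rw [hm]; ring

/-- `N (N - 2) ω_N`, the normalising constant of the fundamental solution. -/
def nrmC (N : ℕ) : ℝ := (N : ℝ) * ((N : ℝ) - 2) * (volume (ball (0 : Euc N) 1)).toReal

lemma vol_ball_pos {N : ℕ} : 0 < (volume (ball (0 : Euc N) 1)).toReal :=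
  ENNReal.toReal_pos (measure_ball_pos _ _ one_pos).ne' measure_ball_lt_top.ne

lemma nrmC_pos {N : ℕ} (hN : 3 ≤ N) : 0 < nrmC N := by
  have h : (3 : ℝ) ≤ N := by exact_mod_cast hN
  have : 0 < (N : ℝ) - 2 := by linarith
  have := vol_ball_pos (N := N)
  unfold nrmC; positivity

/-- Picone's inequality for the regularised potential of `φ`, shifted by `δ > 0`. -/
lemma picone_reg {N : ℕ} (hN : 3 ≤ N) {ε δ : ℝ} (hε : 0 < ε) (hδ : 0 < δ) {φ ψ : Euc N → ℝ}
    (hφ : ContDiff ℝ 1 φ) (hφc : HasCompactSupport φ) (hφ0 : ∀ x, 0 ≤ φ x)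
    (hψ : ContDiff ℝ 1 ψ) (hψc : HasCompactSupport ψ) :
    ∫ x, cv (fun y => (volume (ball (0 : Euc N) 1)).toReal⁻¹ * ε *
        regKer (((N : ℝ) + 2) / 2) ε y) φ x *
        (ψ x ^ 2 / ((nrmC N)⁻¹ * cv (regKer (((N : ℝ) - 2) / 2) ε) φ x + δ))
      ≤ ∫ x, ‖gradient ψ x‖ ^ 2 := by
  set m : ℝ := ((N : ℝ) - 2) / 2 with hm
  have hc := nrmC_pos hN
  set G : Fin N → Euc N → ℝ := fun i y => -(2 * m) * (y i * regKer (m + 1) ε y) with hG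
  have hG1 : ∀ i, ContDiff ℝ 1 (G i) := fun i =>
    contDiff_const.mul ((coord_contDiff i).mul (regKer_contDiff hε _))
  have hK := regKer_contDiff (N := N) hε m
  have key := picone_sum (N := N) (v := fun x => (nrmC N)⁻¹ * cv (regKer m ε) φ x + δ)
    (g := fun i x => (nrmC N)⁻¹ * cv (G i) φ x)
    (l := fun i x => (nrmC N)⁻¹ * cv (fun y => fderiv ℝ (G i) y (bvec N i)) φ x) (ψ := ψ)
    ((contDiff_const.mul (cv_contDiff hK.continuous hφ hφc)).add contDiff_const)
    (fun x => by
      have : 0 ≤ cv (regKer m ε) φ x := by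
        rw [cv_apply]
        exact integral_nonneg fun t => mul_nonneg (regKer_pos hε _ _).le (hφ0 _)
      positivity)
    (fun i x => by
      have h := ((cv_contDiff hK.continuous hφ hφc).differentiable one_ne_zero x)
      rw [fderiv_add_const, fderiv_const_mul h]
      simp only [_root_.smul_apply, smul_eq_mul]
      rw [cv_fderiv hK hφ hφc]
      simp only [regKer_fderiv hε, hG])
    (fun i => contDiff_const.mul (cv_contDiff (hG1 i).continuous hφ hφc))
    (fun i x => by
      have h := ((cv_contDiff (hG1 i).continuous hφ hφc).differentiable one_ne_zero x)
      rw [fderiv_const_mul h]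
      simp only [_root_.smul_apply, smul_eq_mul]
      rw [cv_fderiv (hG1 i) hφ hφc])
    hψ hψc
  refine le_of_eq_of_le ?_ key
  refine integral_congr_ae (Eventually.of_forall fun x => ?_)
  simp only
  congr 1
  rw [← Finset.mul_sum]
  simp only [cv_apply]
  rw [← integral_finsetSum, ← mul_neg, ← integral_neg, ← integral_const_mul]
  · refine integral_congr_ae (Eventually.of_forall fun t => ?_)
    simp only
    rw [← Finset.sum_mul, ← neg_mul, hG, regKer_laplacian hε t, nrmC]
    have h3 : (3 : ℝ) ≤ N := by exact_mod_cast hN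
    have h2 : (N : ℝ) - 2 ≠ 0 := by linarith
    have h1 : (N : ℝ) ≠ 0 := by linarith
    have := (vol_ball_pos (N := N)).ne'
    field_simp
  · intro i _
    refine cv_integrable ?_ hφ.continuous hφc x
    exact ((hG1 i).continuous_fderiv one_ne_zero).clm_apply continuous_const

/-! ### Approximate identity -/

/-- An explicit primitive of the radial profile of the kernel `(|x|² + 1)^{-(N+2)/2}`. -/
lemma radial_hasDerivAt {N : ℕ} (hN : 3 ≤ N) (r : ℝ) :
    HasDerivAt (fun r : ℝ => r ^ N * (r ^ 2 + 1) ^ (-((N : ℝ) / 2)) / N)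
      (r ^ (N - 1) • (r ^ 2 + 1) ^ (-(((N : ℝ) + 2) / 2))) r := by
  have hb : 0 < r ^ 2 + 1 := by positivity
  have h1 : HasDerivAt (fun r : ℝ => r ^ N) (N * r ^ (N - 1)) r := hasDerivAt_pow N r
  have h2 : HasDerivAt (fun r : ℝ => r ^ 2 + 1) (2 * r) r := by
    simpa using (hasDerivAt_pow 2 r).add_const 1
  have h3 := h2.rpow_const (p := -((N : ℝ) / 2)) (Or.inl hb.ne')
  have h4 := (h1.mul h3).div_const (N : ℝ)
  refine h4.congr_deriv ?_
  have hN0 : (N : ℝ) ≠ 0 := by positivity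
  have e1 : (r ^ 2 + 1) ^ (-((N : ℝ) / 2))
      = (r ^ 2 + 1) * (r ^ 2 + 1) ^ (-(((N : ℝ) + 2) / 2)) := by
    rw [show -((N : ℝ) / 2) = 1 + -(((N : ℝ) + 2) / 2) by ring, Real.rpow_add hb, Real.rpow_one]
  have e2 : -((N : ℝ) / 2) - 1 = -(((N : ℝ) + 2) / 2) := by ring
  have e3 : r ^ N = r * r ^ (N - 1) := by
    rw [← pow_succ']; congr 1; omega
  rw [e2, e1, e3, smul_eq_mul]
  field_simp
  ring

lemma radial_tendsto {N : ℕ} :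
    Tendsto (fun r : ℝ => r ^ N * (r ^ 2 + 1) ^ (-((N : ℝ) / 2)) / N) atTop
      (nhds (1 / (N : ℝ))) := by
  have h1 : Tendsto (fun r : ℝ => 1 - (r ^ 2 + 1)⁻¹) atTop (nhds (1 - 0)) := by
    refine tendsto_const_nhds.sub (tendsto_inv_atTop_zero.comp ?_)
    exact tendsto_atTop_add_const_right _ _ (tendsto_pow_atTop two_ne_zero)
  have h2 := (h1.rpow_const (p := (N : ℝ) / 2) (Or.inl (by norm_num))).div_const (N : ℝ)
  rw [sub_zero, Real.one_rpow] at h2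
  refine h2.congr' ?_
  filter_upwards [eventually_gt_atTop 0] with r hr
  have hb : 0 < r ^ 2 + 1 := by positivity
  have e : 1 - (r ^ 2 + 1)⁻¹ = r ^ 2 / (r ^ 2 + 1) := by field_simp; ring
  rw [e, Real.div_rpow (by positivity) hb.le, Real.rpow_neg hb.le, div_eq_mul_inv]
  congr 2
  rw [← Real.rpow_natCast r 2, ← Real.rpow_mul hr.le, ← Real.rpow_natCast r N]
  congr 1
  push_cast; ring

lemma regKer_one_integrable {N : ℕ} (hN : 3 ≤ N) :
    Integrable (regKer (((N : ℝ) + 2) / 2) 1 : Euc N → ℝ) := by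
  have : Nontrivial (Euc N) := by
    have : Nonempty (Fin N) := ⟨⟨0, by omega⟩⟩
    infer_instance
  have := (integrable_fun_norm_addHaar (volume : Measure (Euc N))
    (f := fun r : ℝ => (r ^ 2 + 1) ^ (-(((N : ℝ) + 2) / 2)))).2 (by
      simp only [finrank_euclideanSpace, Fintype.card_fin]
      refine integrableOn_Ioi_deriv_of_nonneg' (fun r _ => radial_hasDerivAt hN r) ?_ radial_tendsto
      intro r hr
      have : (0 : ℝ) < r := hr
      rw [smul_eq_mul]
      positivity)
  exact this

/-- The mass of the regularised Dirac kernel at scale one. -/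
lemma regKer_one_integral {N : ℕ} (hN : 3 ≤ N) :
    ∫ x : Euc N, regKer (((N : ℝ) + 2) / 2) 1 x = (volume (ball (0 : Euc N) 1)).toReal := by
  have : Nontrivial (Euc N) := by
    have : Nonempty (Fin N) := ⟨⟨0, by omega⟩⟩
    infer_instance
  have h := integral_fun_norm_addHaar (volume : Measure (Euc N))
    (fun r : ℝ => (r ^ 2 + 1) ^ (-(((N : ℝ) + 2) / 2)))
  have h2 := integral_Ioi_of_hasDerivAt_of_nonneg' (a := 0)
    (fun r _ => radial_hasDerivAt hN r) (fun r hr => by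
      have : (0 : ℝ) < r := hr
      rw [smul_eq_mul]
      positivity) (radial_tendsto (N := N))
  simp only [finrank_euclideanSpace, Fintype.card_fin] at h
  rw [h2] at h
  refine Eq.trans h ?_
  have hN0 : (N : ℝ) ≠ 0 := by positivity
  have hN1 : N ≠ 0 := by omega
  simp [Measure.real, hN1]
  field_simp

/-- Rescaling turns the kernel with parameter `t²` into the kernel with parameter `1`. -/
lemma cv_scale {N : ℕ} {t : ℝ} (ht : 0 < t) (φ : Euc N → ℝ) (k : ℝ) (x : Euc N) :
    cv (fun y => k * t ^ 2 * regKer (((N : ℝ) + 2) / 2) (t ^ 2) y) φ x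
      = ∫ y, k * regKer (((N : ℝ) + 2) / 2) 1 y * φ (x - t • y) := by
  have h := Measure.integral_comp_smul (volume : Measure (Euc N))
    (fun s => k * t ^ 2 * regKer (((N : ℝ) + 2) / 2) (t ^ 2) s * φ (x - s)) t
  rw [finrank_euclideanSpace, Fintype.card_fin, abs_of_pos (by positivity), smul_eq_mul] at h
  rw [cv_apply]
  have h2 : ∫ s, k * t ^ 2 * regKer (((N : ℝ) + 2) / 2) (t ^ 2) s * φ (x - s)
      = t ^ N * ∫ y : Euc N, k * t ^ 2 * regKer (((N : ℝ) + 2) / 2) (t ^ 2) (t • y) *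
          φ (x - t • y) := by
    rw [h]; field_simp
  rw [h2, ← integral_const_mul]
  refine integral_congr_ae (Eventually.of_forall fun y => ?_)
  simp only
  have e : regKer (((N : ℝ) + 2) / 2) (t ^ 2) (t • y)
      = (t ^ N * t ^ 2)⁻¹ * regKer (((N : ℝ) + 2) / 2) 1 y := by
    unfold regKer
    rw [norm_smul, Real.norm_of_nonneg ht.le, mul_pow,
      show t ^ 2 * ‖y‖ ^ 2 + t ^ 2 = t ^ 2 * (‖y‖ ^ 2 + 1) by ring,
      Real.mul_rpow (by positivity) (by positivity), Real.rpow_neg (by positivity) (_ / 2),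
      ← Real.rpow_natCast t 2, ← Real.rpow_mul ht.le, ← Real.rpow_natCast t N,
      ← Real.rpow_add ht]
    congr 3
    push_cast; ring
  rw [e]
  field_simp

/-- The regularised Dirac kernels form an approximate identity. -/
lemma cv_tendsto {N : ℕ} (hN : 3 ≤ N) {φ : Euc N → ℝ} (hφ : Continuous φ)
    (hφc : HasCompactSupport φ) {t : ℕ → ℝ} (ht : ∀ n, 0 < t n)
    (ht0 : Tendsto t atTop (nhds 0)) (x : Euc N) :
    Tendsto (fun n => cv (fun y => (volume (ball (0 : Euc N) 1)).toReal⁻¹ * (t n) ^ 2 *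
        regKer (((N : ℝ) + 2) / 2) ((t n) ^ 2) y) φ x) atTop (nhds (φ x)) := by
  set w := (volume (ball (0 : Euc N) 1)).toReal with hw
  have hwp : 0 < w := vol_ball_pos
  simp only [cv_scale (ht _)]
  obtain ⟨M, hM⟩ := hφ.bounded_above_of_compact_support hφc
  have hlim : φ x = ∫ y : Euc N, w⁻¹ * regKer (((N : ℝ) + 2) / 2) 1 y * φ x := by
    rw [integral_mul_const, integral_const_mul, regKer_one_integral hN, ← hw]
    field_simp
  rw [hlim]
  refine tendsto_integral_of_dominated_convergence
    (fun y => w⁻¹ * regKer (((N : ℝ) + 2) / 2) 1 y * M) ?_ ?_ ?_ ?_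
  · intro n
    refine Continuous.aestronglyMeasurable ?_
    exact (continuous_const.mul (regKer_contDiff one_pos _).continuous).mul
      (hφ.comp (continuous_const.sub (continuous_id.const_smul (t n))))
  · exact ((regKer_one_integrable hN).const_mul _).mul_const _
  · intro n
    refine Eventually.of_forall fun y => ?_
    have : 0 ≤ w⁻¹ * regKer (((N : ℝ) + 2) / 2) 1 y :=
      mul_nonneg (by positivity) (regKer_pos one_pos _ _).le
    rw [norm_mul, Real.norm_of_nonneg this]
    exact mul_le_mul_of_nonneg_left (hM _) this
  · refine Eventually.of_forall fun y => ?_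
    refine tendsto_const_nhds.mul ?_
    have h1 : Tendsto (fun n => x - t n • y) atTop (nhds (x - (0 : ℝ) • y)) :=
      tendsto_const_nhds.sub (ht0.smul_const y)
    rw [zero_smul, sub_zero] at h1
    exact (hφ.tendsto x).comp h1

lemma fundSol_measurable {N : ℕ} : Measurable (fundSol N) := by
  unfold fundSol
  fun_prop

/-- The point `x = 0` is excluded because `fundSol N 0 = 0` by convention. -/
lemma regKer_le_fundSol {N : ℕ} (hN : 3 ≤ N) {ε : ℝ} (hε : 0 < ε) {x : Euc N} (hx : x ≠ 0) :
    (nrmC N)⁻¹ * regKer (((N : ℝ) - 2) / 2) ε x ≤ fundSol N x := by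
  have hc := nrmC_pos hN
  have h3 : (3 : ℝ) ≤ N := by exact_mod_cast hN
  have hx' : 0 < ‖x‖ := norm_pos_iff.2 hx
  have : fundSol N x = (nrmC N)⁻¹ * (‖x‖ ^ 2) ^ (-(((N : ℝ) - 2) / 2)) := by
    unfold fundSol nrmC
    rw [div_eq_mul_inv, mul_comm, ← Real.rpow_natCast ‖x‖ 2, ← Real.rpow_mul hx'.le]
    congr 2
    push_cast; ring
  rw [this]
  refine mul_le_mul_of_nonneg_left ?_ (by positivity)
  exact Real.rpow_le_rpow_of_nonpos (by positivity) (by linarith) (by linarith)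

lemma GammaConvFn_measurable {N : ℕ} {f : Euc N → ℝ} (hf : Measurable f) :
    Measurable (GammaConvFn N f) := by
  refine Measurable.lintegral_prod_right' (ν := (volume : Measure (Euc N)))
    (f := fun q : Euc N × Euc N => ENNReal.ofReal (fundSol N (q.1 - q.2)) * ENNReal.ofReal (f q.2)) ?_
  exact ((fundSol_measurable.comp (measurable_fst.sub measurable_snd)).ennreal_ofReal).mul
    (hf.comp measurable_snd).ennreal_ofReal

lemma cv_le_GammaConvFn {N : ℕ} (hN : 3 ≤ N) {ε : ℝ} (hε : 0 < ε) {φ : Euc N → ℝ}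
    (hφ : Continuous φ) (hφc : HasCompactSupport φ) (hφ0 : ∀ x, 0 ≤ φ x) (x : Euc N) :
    ENNReal.ofReal ((nrmC N)⁻¹ * cv (regKer (((N : ℝ) - 2) / 2) ε) φ x) ≤ GammaConvFn N φ x := by
  have : Nontrivial (Euc N) := by
    have : Nonempty (Fin N) := ⟨⟨0, by omega⟩⟩
    infer_instance
  have hc := nrmC_pos hN
  rw [cv_apply, ← integral_const_mul, ofReal_integral_eq_lintegral_ofReal]
  · unfold GammaConvFn
    rw [← lintegral_sub_left_eq_self (μ := (volume : Measure (Euc N)))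
      (fun y => ENNReal.ofReal (fundSol N (x - y)) * ENNReal.ofReal (φ y)) x]
    refine lintegral_mono_ae ?_
    filter_upwards [compl_mem_ae_iff.2 (measure_singleton (μ := (volume : Measure (Euc N))) 0)]
      with t ht
    rw [_root_.sub_sub_cancel, ← mul_assoc, ENNReal.ofReal_mul]
    · gcongr
      exact regKer_le_fundSol hN hε ht
    · exact mul_nonneg (by positivity) (regKer_pos hε _ _).le
  · exact (cv_integrable (regKer_contDiff hε _).continuous hφ hφc x).const_mul _
  · refine Eventually.of_forall fun t => ?_
    exact mul_nonneg (by positivity) (mul_nonneg (regKer_pos hε _ _).le (hφ0 _))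

/-- The Hardy-type inequality for the Newtonian potential of a test density. -/
lemma hardy_smooth {N : ℕ} (hN : 3 ≤ N) {δ : ℝ} (hδ : 0 < δ) {φ ψ : Euc N → ℝ}
    (hφ : ContDiff ℝ 1 φ) (hφc : HasCompactSupport φ) (hφ0 : ∀ x, 0 ≤ φ x)
    (hψ : ContDiff ℝ 1 ψ) (hψc : HasCompactSupport ψ) :
    ∫⁻ x, ENNReal.ofReal (φ x * ψ x ^ 2) / (GammaConvFn N φ x + ENNReal.ofReal δ)
      ≤ ENNReal.ofReal (∫ x, ‖gradient ψ x‖ ^ 2) := by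
  have hc := nrmC_pos hN
  set t : ℕ → ℝ := fun n => 1 / ((n : ℝ) + 1) with ht
  have htp : ∀ n, 0 < t n := fun n => by simp only [ht]; positivity
  have ht0 : Tendsto t atTop (nhds 0) := tendsto_one_div_add_atTop_nhds_zero_nat
  set K : ℕ → Euc N → ℝ := fun n => cv (fun y => (volume (ball (0 : Euc N) 1)).toReal⁻¹ *
    (t n) ^ 2 * regKer (((N : ℝ) + 2) / 2) ((t n) ^ 2) y) φ with hK
  have hKc : ∀ n, Continuous (K n) := fun n =>
    (cv_contDiff (continuous_const.mul (regKer_contDiff (pow_pos (htp n) 2) _).continuous)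
      hφ hφc).continuous
  have hK0 : ∀ n x, 0 ≤ K n x := fun n x => by
    simp only [hK, cv_apply]
    refine integral_nonneg fun s => mul_nonneg (mul_nonneg ?_ (regKer_pos (pow_pos (htp n) 2) _ _).le)
      (hφ0 _)
    positivity
  have hΓm := GammaConvFn_measurable hφ.continuous.measurable
  have hbound : ∀ n, ∫⁻ x, ENNReal.ofReal (K n x * ψ x ^ 2) /
      (GammaConvFn N φ x + ENNReal.ofReal δ) ≤ ENNReal.ofReal (∫ x, ‖gradient ψ x‖ ^ 2) := by
    intro n
    have hε := pow_pos (htp n) 2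
    set P : Euc N → ℝ := fun x => (nrmC N)⁻¹ * cv (regKer (((N : ℝ) - 2) / 2) ((t n) ^ 2)) φ x
      with hP
    have hPc : Continuous P :=
      continuous_const.mul (cv_contDiff (regKer_contDiff hε _).continuous hφ hφc).continuous
    have hP0 : ∀ x, 0 ≤ P x := fun x => by
      simp only [hP, cv_apply]
      exact mul_nonneg (by positivity)
        (integral_nonneg fun s => mul_nonneg (regKer_pos hε _ _).le (hφ0 _))
    have hPd : ∀ x, 0 < P x + δ := fun x => by linarith [hP0 x]
    have h1 := picone_reg hN hε hδ hφ hφc hφ0 hψ hψc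
    have hKint : Integrable fun x => K n x * (ψ x ^ 2 / (P x + δ)) := by
      have : Continuous fun x => K n x * (ψ x ^ 2 / (P x + δ)) :=
        (hKc n).mul ((hψ.continuous.pow 2).div (hPc.add continuous_const) fun x => (hPd x).ne')
      refine this.integrable_of_hasCompactSupport (hψc.mono fun x hx => ?_)
      simp only [Function.mem_support] at hx ⊢
      intro h; apply hx; simp [h]
    refine le_trans ?_ (ENNReal.ofReal_le_ofReal h1)
    rw [ofReal_integral_eq_lintegral_ofReal hKint (Eventually.of_forall fun x =>
      mul_nonneg (hK0 n x) (div_nonneg (sq_nonneg _) (hPd x).le))]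
    refine lintegral_mono fun x => ?_
    have e : K n x * (ψ x ^ 2 / (P x + δ)) = K n x * ψ x ^ 2 / (P x + δ) := by ring
    change _ ≤ ENNReal.ofReal (K n x * (ψ x ^ 2 / (P x + δ)))
    rw [e, ENNReal.ofReal_div_of_pos (hPd x)]
    refine ENNReal.div_le_div_left ?_ _
    rw [ENNReal.ofReal_add (hP0 x) hδ.le]
    gcongr
    exact cv_le_GammaConvFn hN hε hφ.continuous hφc hφ0 x
  have hlim : ∀ x, liminf (fun n => ENNReal.ofReal (K n x * ψ x ^ 2) /
      (GammaConvFn N φ x + ENNReal.ofReal δ)) atTop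
      = ENNReal.ofReal (φ x * ψ x ^ 2) / (GammaConvFn N φ x + ENNReal.ofReal δ) := by
    intro x
    refine Tendsto.liminf_eq ?_
    refine ENNReal.Tendsto.div_const ?_ (Or.inr ?_)
    · exact (ENNReal.continuous_ofReal.tendsto _).comp
        ((cv_tendsto hN hφ.continuous hφc htp ht0 x).mul_const _)
    · simp [hδ]
  calc _ = ∫⁻ x, liminf (fun n => ENNReal.ofReal (K n x * ψ x ^ 2) /
      (GammaConvFn N φ x + ENNReal.ofReal δ)) atTop := by simp only [hlim]
    _ ≤ liminf (fun n => ∫⁻ x, ENNReal.ofReal (K n x * ψ x ^ 2) /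
      (GammaConvFn N φ x + ENNReal.ofReal δ)) atTop := by
        refine lintegral_liminf_le fun n => ?_
        exact ((hKc n).mul (hψ.continuous.pow 2)).measurable.ennreal_ofReal.div
          (hΓm.add_const _)
    _ ≤ _ := by
        refine (liminf_le_liminf (Eventually.of_forall hbound)).trans ?_
        simp

/-! ### Hardy inequality for bounded densities and for supersolutions -/

lemma fundSol_locallyIntegrable {N : ℕ} (hN : 3 ≤ N) :
    LocallyIntegrable (fundSol N) volume := by
  have hc := nrmC_pos hN
  refine locallyIntegrable_of_norm_le_rpow (C := (nrmC N)⁻¹) (α := (N : ℝ) - 2) ?_ ?_ ?_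
    fundSol_measurable.aestronglyMeasurable
  · rw [finrank_euclideanSpace, Fintype.card_fin]; omega
  · rw [finrank_euclideanSpace, Fintype.card_fin]; linarith
  · refine Eventually.of_forall fun x => ?_
    rw [Real.norm_of_nonneg (fundSol_nonneg hN x), neg_sub]
    unfold fundSol nrmC
    rw [div_eq_mul_inv, mul_comm]

lemma fundSol_lintegral_ball {N : ℕ} (hN : 3 ≤ N) (x : Euc N) (R : ℝ) :
    ∫⁻ y, ENNReal.ofReal (fundSol N (x - y)) *
      (closedBall (0 : Euc N) R).indicator (fun _ => 1) y < ⊤ := by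
  rw [← lintegral_sub_left_eq_self _ x]
  have h := ((fundSol_locallyIntegrable hN).integrableOn_isCompact
    (isCompact_closedBall x R)).lintegral_lt_top
  rw [← lintegral_indicator isClosed_closedBall.measurableSet] at h
  refine lt_of_le_of_lt (lintegral_mono fun t => ?_) h
  rw [_root_.sub_sub_cancel]
  by_cases ht : x - t ∈ closedBall (0 : Euc N) R
  · have ht' : t ∈ closedBall x R := by
      rw [mem_closedBall, dist_comm, dist_eq_norm]; simpa using ht
    simp [Set.indicator_of_mem ht, Set.indicator_of_mem ht']
  · simp [Set.indicator_of_notMem ht]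

/-- The Hardy-type inequality for the potential of a bounded density with bounded support. -/
lemma hardy_bounded {N : ℕ} (hN : 3 ≤ N) {δ M R : ℝ} (hδ : 0 < δ) {h ψ : Euc N → ℝ}
    (hm : Measurable h) (h0 : ∀ x, 0 ≤ h x) (hM : ∀ x, h x ≤ M) (hR : ∀ x, R < ‖x‖ → h x = 0)
    (hψ : ContDiff ℝ 1 ψ) (hψc : HasCompactSupport ψ) :
    ∫⁻ x, ENNReal.ofReal (h x * ψ x ^ 2) / (GammaConvFn N h x + ENNReal.ofReal δ)
      ≤ ENNReal.ofReal (∫ x, ‖gradient ψ x‖ ^ 2) := by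
  have hM0 : 0 ≤ M := (h0 0).trans (hM 0)
  have hcs : HasCompactSupport h := by
    refine HasCompactSupport.intro (isCompact_closedBall (0 : Euc N) R) fun x hx => hR x ?_
    simpa using hx
  have hli : LocallyIntegrable h volume := by
    refine locallyIntegrable_of_norm_le_rpow (C := M) (α := 0) ?_ ?_ ?_ hm.aestronglyMeasurable
    · rw [finrank_euclideanSpace, Fintype.card_fin]; omega
    · rw [finrank_euclideanSpace, Fintype.card_fin]; positivity
    · refine Eventually.of_forall fun x => ?_
      simpa [abs_of_nonneg (h0 x)] using hM x
  let B : ℕ → ContDiffBump (0 : Euc N) := fun n =>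
    ⟨1 / ((n : ℝ) + 1) / 2, 1 / ((n : ℝ) + 1), by positivity, half_lt_self (by positivity)⟩
  have hBo : Tendsto (fun n => (B n).rOut) atTop (nhds 0) :=
    tendsto_one_div_add_atTop_nhds_zero_nat
  have hBo1 : ∀ n, (B n).rOut ≤ 1 := fun n => by
    change 1 / ((n : ℝ) + 1) ≤ 1
    rw [div_le_one (by positivity)]
    have : (0 : ℝ) ≤ n := by positivity
    linarith
  have hae := ContDiffBump.ae_convolution_tendsto_right_of_locallyIntegrable
    (μ := (volume : Measure (Euc N))) (φ := B) (K := 2) (l := atTop) hBo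
    (Eventually.of_forall fun n => by
      change 1 / ((n : ℝ) + 1) ≤ 2 * (1 / ((n : ℝ) + 1) / 2)
      linarith) hli
  set φ : ℕ → Euc N → ℝ := fun n => convolution ((B n).normed volume) h
    (ContinuousLinearMap.lsmul ℝ ℝ) volume with hφ
  have hφx : ∀ n x, φ n x = ∫ t, (B n).normed volume t * h (x - t) := fun n x => rfl
  have hφ1 : ∀ n, ContDiff ℝ 1 (φ n) := fun n =>
    (B n).hasCompactSupport_normed.contDiff_convolution_left (n := 1) _ (B n).contDiff_normed hli
  have hφc : ∀ n, HasCompactSupport (φ n) := fun n =>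
    (B n).hasCompactSupport_normed.convolution _ hcs
  have hφ0 : ∀ n x, 0 ≤ φ n x := fun n x => by
    rw [hφx]
    exact integral_nonneg fun t => mul_nonneg ((B n).nonneg_normed t) (h0 _)
  have hφM : ∀ n x, φ n x ≤ M := fun n x => by
    have : ∫ t, (B n).normed volume t * M = M := by
      rw [integral_mul_const, (B n).integral_normed, one_mul]
    rw [hφx, ← this]
    refine integral_mono_of_nonneg (Eventually.of_forall fun t =>
      mul_nonneg ((B n).nonneg_normed t) (h0 _)) ((B n).integrable_normed.mul_const _)
      (Eventually.of_forall fun t => ?_)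
    exact mul_le_mul_of_nonneg_left (hM _) ((B n).nonneg_normed t)
  have hφR : ∀ n x, R + 1 < ‖x‖ → φ n x = 0 := fun n x hx => by
    rw [hφx]
    refine integral_eq_zero_of_ae (Eventually.of_forall fun t => ?_)
    by_cases ht : t ∈ Function.support ((B n).normed volume)
    · rw [(B n).support_normed_eq, mem_ball_zero_iff] at ht
      have : R < ‖x - t‖ := by
        have := norm_sub_norm_le x t
        have := hBo1 n
        linarith
      simp [hR _ this]
    · simp [Function.notMem_support.1 ht]
  -- The mollified densities are all bounded by `M` on the ball of radius `R + 1`, where the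
  -- fundamental solution is integrable.
  have hΓ : ∀ x, Tendsto (fun n => GammaConvFn N (φ n) x) atTop (nhds (GammaConvFn N h x)) := by
    intro x
    refine tendsto_lintegral_of_dominated_convergence (fun y => ENNReal.ofReal M *
      (ENNReal.ofReal (fundSol N (x - y)) *
        (closedBall (0 : Euc N) (R + 1)).indicator (fun _ => 1) y)) ?_ ?_ ?_ ?_
    · intro n
      exact ((fundSol_measurable.comp (measurable_const.sub measurable_id)).ennreal_ofReal).mul
        (hφ1 n).continuous.measurable.ennreal_ofReal
    · intro n
      refine Eventually.of_forall fun y => ?_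
      by_cases hy : y ∈ closedBall (0 : Euc N) (R + 1)
      · simp only [Set.indicator_of_mem hy, mul_one]
        rw [mul_comm]
        gcongr
        exact hφM n y
      · have : φ n y = 0 := hφR n y (by simpa using hy)
        simp [this]
    · rw [lintegral_const_mul']
      · exact (ENNReal.mul_lt_top ENNReal.ofReal_lt_top (fundSol_lintegral_ball hN x _)).ne
      · exact ENNReal.ofReal_ne_top
    · filter_upwards [hae] with y hy
      exact ENNReal.Tendsto.const_mul ((ENNReal.continuous_ofReal.tendsto _).comp hy)
        (Or.inr ENNReal.ofReal_ne_top)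
  have hlim : ∀ᵐ x, liminf (fun n => ENNReal.ofReal (φ n x * ψ x ^ 2) /
      (GammaConvFn N (φ n) x + ENNReal.ofReal δ)) atTop
      = ENNReal.ofReal (h x * ψ x ^ 2) / (GammaConvFn N h x + ENNReal.ofReal δ) := by
    filter_upwards [hae] with x hx
    refine Tendsto.liminf_eq ?_
    refine ENNReal.Tendsto.div ?_ (Or.inr ?_) ((hΓ x).add_const _) (Or.inr ?_)
    · exact (ENNReal.continuous_ofReal.tendsto _).comp (hx.mul_const _)
    · simp [hδ]
    · exact ENNReal.ofReal_ne_top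
  calc _ = ∫⁻ x, liminf (fun n => ENNReal.ofReal (φ n x * ψ x ^ 2) /
      (GammaConvFn N (φ n) x + ENNReal.ofReal δ)) atTop :=
        lintegral_congr_ae (hlim.mono fun x hx => hx.symm)
    _ ≤ liminf (fun n => ∫⁻ x, ENNReal.ofReal (φ n x * ψ x ^ 2) /
      (GammaConvFn N (φ n) x + ENNReal.ofReal δ)) atTop := by
        refine lintegral_liminf_le fun n => ?_
        exact ((hφ1 n).continuous.mul (hψ.continuous.pow 2)).measurable.ennreal_ofReal.div
          ((GammaConvFn_measurable (hφ1 n).continuous.measurable).add_const _)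
    _ ≤ _ := by
        refine (liminf_le_liminf (Eventually.of_forall fun n =>
          hardy_smooth hN hδ (hφ1 n) (hφc n) (hφ0 n) hψ hψc)).trans ?_
        simp

/-- The Hardy-type inequality for a potential `V` admitting a positive supersolution `z`, in the
integral sense `Γ * (V z) ≤ z`. The density `V z` is truncated at height `k` and outside the ball
of radius `k`; its potential stays below `z`, so that the quotient tends to `V`. -/
lemma hardy_supersolution {N : ℕ} (hN : 3 ≤ N) {V z ψ : Euc N → ℝ} (hVm : Measurable V)
    (hzm : Measurable z) (hV0 : ∀ᵐ x, 0 ≤ V x) (hz0 : ∀ᵐ x, 0 < z x)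
    (hsup : ∀ᵐ x, GammaConvFn N (fun y => V y * z y) x ≤ ENNReal.ofReal (z x))
    (hψ : ContDiff ℝ 1 ψ) (hψc : HasCompactSupport ψ) :
    ∫⁻ x, ENNReal.ofReal (V x * ψ x ^ 2) ≤ ENNReal.ofReal (∫ x, ‖gradient ψ x‖ ^ 2) := by
  set h : ℕ → Euc N → ℝ := fun k =>
    (closedBall (0 : Euc N) k).indicator fun x => max 0 (min (V x * z x) k) with hh
  set δ : ℕ → ℝ := fun k => 1 / ((k : ℝ) + 1) with hδ
  have hδp : ∀ k, 0 < δ k := fun k => by simp only [hδ]; positivity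
  have hδ0 : Tendsto δ atTop (nhds 0) := tendsto_one_div_add_atTop_nhds_zero_nat
  have hm : ∀ k, Measurable (h k) := fun k =>
    (measurable_const.max ((hVm.mul hzm).min measurable_const)).indicator
      isClosed_closedBall.measurableSet
  have h0 : ∀ k x, 0 ≤ h k x := fun k x => Set.indicator_nonneg (fun _ _ => le_max_left _ _) x
  have hM : ∀ k x, h k x ≤ k := fun k x => by
    refine Set.indicator_le' (g := fun _ => (k : ℝ)) (fun x _ => ?_) (fun x _ => by positivity) x
    exact max_le (by positivity) (min_le_right _ _)
  have hR : ∀ (k : ℕ) x, (k : ℝ) < ‖x‖ → h k x = 0 := fun k x hx =>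
    Set.indicator_of_notMem (by simpa using hx) _
  have hle : ∀ k, ∀ᵐ x, h k x ≤ V x * z x := fun k => by
    filter_upwards [hV0, hz0] with x h1 h2
    have := mul_nonneg h1 h2.le
    by_cases hx : x ∈ closedBall (0 : Euc N) k
    · simp only [hh, Set.indicator_of_mem hx]
      exact max_le this (min_le_left _ _)
    · simp only [hh, Set.indicator_of_notMem hx]
      exact this
  have hlim : ∀ᵐ x, Tendsto (fun k => ENNReal.ofReal (h k x * ψ x ^ 2) /
      (ENNReal.ofReal (z x) + ENNReal.ofReal (δ k))) atTop
      (nhds (ENNReal.ofReal (V x * ψ x ^ 2))) := by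
    filter_upwards [hV0, hz0] with x h1 h2
    have h3 := mul_nonneg h1 h2.le
    have e : ENNReal.ofReal (V x * ψ x ^ 2)
        = ENNReal.ofReal (V x * z x * ψ x ^ 2) / (ENNReal.ofReal (z x) + ENNReal.ofReal 0) := by
      rw [ENNReal.ofReal_zero, add_zero, ← ENNReal.ofReal_div_of_pos h2]
      congr 1; field_simp
    rw [e]
    refine ENNReal.Tendsto.div ?_ (Or.inr ?_)
      (((ENNReal.continuous_ofReal.tendsto _).comp hδ0).const_add _) (Or.inr ?_)
    · refine tendsto_const_nhds.congr' ?_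
      obtain ⟨n, hn⟩ := exists_nat_ge (max ‖x‖ (V x * z x))
      filter_upwards [eventually_ge_atTop n] with k hk
      have hk' : (n : ℝ) ≤ k := by exact_mod_cast hk
      have hx : x ∈ closedBall (0 : Euc N) k := by
        simpa using (le_max_left _ _).trans (hn.trans hk')
      simp only [hh, Set.indicator_of_mem hx]
      rw [min_eq_left ((le_max_right _ _).trans (hn.trans hk')), max_eq_right h3]
    · simp [h2]
    · simp
  calc _ = ∫⁻ x, liminf (fun k => ENNReal.ofReal (h k x * ψ x ^ 2) /
      (ENNReal.ofReal (z x) + ENNReal.ofReal (δ k))) atTop :=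
        lintegral_congr_ae (hlim.mono fun x hx => hx.liminf_eq.symm)
    _ ≤ liminf (fun k => ∫⁻ x, ENNReal.ofReal (h k x * ψ x ^ 2) /
      (ENNReal.ofReal (z x) + ENNReal.ofReal (δ k))) atTop := by
        refine lintegral_liminf_le fun k => ?_
        exact ((hm k).mul (hψ.continuous.pow 2).measurable).ennreal_ofReal.div
          (hzm.ennreal_ofReal.add_const _)
    _ ≤ liminf (fun _ : ℕ => ENNReal.ofReal (∫ x, ‖gradient ψ x‖ ^ 2)) atTop := by
        refine liminf_le_liminf (Eventually.of_forall fun k => ?_)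
        refine le_trans (lintegral_mono_ae ?_)
          (hardy_bounded hN (hδp k) (hm k) (h0 k) (hM k) (hR k) hψ hψc)
        filter_upwards [hsup] with x hx
        refine ENNReal.div_le_div_left ?_ _
        gcongr
        refine le_trans (lintegral_mono_ae ?_) hx
        filter_upwards [hle k] with y hy
        gcongr
    _ = _ := by simp

/-! ### Comparison of solutions -/

lemma GammaConvMeas_measurable {N : ℕ} (μ : Measure (Euc N)) [SFinite μ] :
    Measurable (GammaConvMeas N μ) := by
  refine Measurable.lintegral_prod_right' (ν := μ)
    (f := fun q : Euc N × Euc N => ENNReal.ofReal (fundSol N (q.1 - q.2))) ?_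
  exact (fundSol_measurable.comp (measurable_fst.sub measurable_snd)).ennreal_ofReal

/-- The potential of a nontrivial measure is positive almost everywhere. Since `fundSol N 0 = 0`
by the junk-value convention of real powers, it vanishes at `x` if `μ` is carried by `{x}`, which
can happen for at most one point `x`. -/
lemma GammaConvMeas_pos {N : ℕ} (hN : 3 ≤ N) {μ : Measure (Euc N)} (hμ : μ ≠ 0) :
    ∀ᵐ x, 0 < GammaConvMeas N μ x := by
  have : Nontrivial (Euc N) := by
    have : Nonempty (Fin N) := ⟨⟨0, by omega⟩⟩
    infer_instance
  have hzero : ∀ x, GammaConvMeas N μ x = 0 → μ {x}ᶜ = 0 := by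
    intro x hx
    have hm : Measurable fun y => ENNReal.ofReal (fundSol N (x - y)) :=
      (fundSol_measurable.comp (measurable_const.sub measurable_id)).ennreal_ofReal
    have h := (lintegral_eq_zero_iff hm).1 hx
    refine measure_mono_null (fun y hy => ?_) (ae_iff.1 h)
    have hxy : 0 < ‖x - y‖ := norm_pos_iff.2 (sub_ne_zero.2 (Ne.symm hy))
    have : 0 < fundSol N (x - y) := div_pos (Real.rpow_pos_of_pos hxy _) (nrmC_pos hN)
    simpa using this
  by_cases hex : ∃ x₀, GammaConvMeas N μ x₀ = 0
  · obtain ⟨x₀, hx₀⟩ := hex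
    filter_upwards [compl_mem_ae_iff.2 (measure_singleton (μ := (volume : Measure (Euc N))) x₀)]
      with x hx
    rw [pos_iff_ne_zero]
    intro h
    apply hμ
    rw [← Measure.measure_univ_eq_zero]
    refine measure_mono_null (fun y _ => ?_) (measure_union_null (hzero x h) (hzero x₀ hx₀))
    by_cases hy : y = x
    · right; rw [hy]; exact hx
    · left; exact hy
  · push Not at hex
    exact Eventually.of_forall fun x => pos_iff_ne_zero.2 (hex x)

/-- A solution `w` for a larger parameter dominates some solution for a smaller one: the iteration
`U ↦ Γ * (α U ^ p) + κ Γ * μ` started at `0` is increasing and stays below `w`, and its limit is a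
fixed point by monotone convergence. The function `A` is a measurable version of `α`. -/
lemma exists_solution_le {N : ℕ} (hN : 3 ≤ N) {α A : Euc N → ℝ} (hA : Measurable A)
    (hA0 : ∀ x, 0 ≤ A x) (hαA : α =ᵐ[volume] A) {p : ℝ} (hp : 0 < p)
    {μ : Measure (Euc N)} [SFinite μ] (hμ : μ ≠ 0) {κ κ' : ℝ} (hκ : 0 < κ) (hκκ' : κ ≤ κ')
    {w : Euc N → ℝ} (hw : IsSolution N α p μ κ' w) :
    ∃ v, IsSolution N α p μ κ v ∧ ∀ᵐ x, v x ≤ w x := by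
  have hk : ∀ f : Euc N → ℝ, (∀ᵐ y, 0 ≤ f y) → ∀ x, GammaConvFn N (fun y => α y * f y ^ p) x
      = ∫⁻ y, ENNReal.ofReal (fundSol N (x - y)) *
        (ENNReal.ofReal (A y) * ENNReal.ofReal (f y) ^ p) := by
    intro f hf x
    refine lintegral_congr_ae ?_
    filter_upwards [hf, hαA] with y hy hay
    rw [hay, ENNReal.ofReal_mul (hA0 y), ENNReal.ofReal_rpow_of_nonneg hy hp.le]
  set T : (Euc N → ℝ≥0∞) → Euc N → ℝ≥0∞ := fun U x =>
    (∫⁻ y, ENNReal.ofReal (fundSol N (x - y)) * (ENNReal.ofReal (A y) * U y ^ p)) +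
      ENNReal.ofReal κ * GammaConvMeas N μ x with hT
  have hkm : ∀ U : Euc N → ℝ≥0∞, Measurable U → ∀ x, Measurable fun y =>
      ENNReal.ofReal (fundSol N (x - y)) * (ENNReal.ofReal (A y) * U y ^ p) := fun U hU x =>
    ((fundSol_measurable.comp (measurable_const.sub measurable_id)).ennreal_ofReal).mul
      (hA.ennreal_ofReal.mul (hU.pow_const p))
  have hTm : ∀ U, Measurable U → Measurable (T U) := by
    intro U hU
    refine Measurable.add ?_ ((GammaConvMeas_measurable μ).const_mul _)
    refine Measurable.lintegral_prod_right' (ν := (volume : Measure (Euc N)))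
      (f := fun q : Euc N × Euc N => ENNReal.ofReal (fundSol N (q.1 - q.2)) *
        (ENNReal.ofReal (A q.2) * U q.2 ^ p)) ?_
    exact ((fundSol_measurable.comp (measurable_fst.sub measurable_snd)).ennreal_ofReal).mul
      ((hA.comp measurable_snd).ennreal_ofReal.mul ((hU.comp measurable_snd).pow_const p))
  have hTmono : ∀ U W : Euc N → ℝ≥0∞, (∀ᵐ y, U y ≤ W y) → ∀ x, T U x ≤ T W x := by
    intro U W h x
    refine add_le_add (lintegral_mono_ae ?_) le_rfl
    filter_upwards [h] with y hy
    gcongr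
  let U : ℕ → Euc N → ℝ≥0∞ := fun n => T^[n] 0
  have hUs : ∀ n, U (n + 1) = T (U n) := fun n => Function.iterate_succ_apply' T n 0
  have hUm : ∀ n, Measurable (U n) := by
    intro n
    induction n with
    | zero => exact measurable_const
    | succ n ih => rw [hUs]; exact hTm _ ih
  have hUstep : ∀ n x, U n x ≤ U (n + 1) x := by
    intro n
    induction n with
    | zero => intro x; exact bot_le
    | succ n ih =>
      intro x
      rw [hUs n, hUs (n + 1)]
      exact hTmono _ _ (Eventually.of_forall ih) x
  have hUmono : ∀ x, Monotone fun n => U n x := fun x => monotone_nat_of_le_succ fun n => hUstep n x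
  have hUw : ∀ n, ∀ᵐ x, U n x ≤ ENNReal.ofReal (w x) := by
    intro n
    induction n with
    | zero => exact Eventually.of_forall fun x => bot_le
    | succ n ih =>
      filter_upwards [hw.2.2] with x hx
      rw [hUs, hx, hk w (hw.2.1.mono fun y hy => hy.le)]
      refine (hTmono _ _ ih x).trans ?_
      simp only [hT]
      gcongr
  set Ui : Euc N → ℝ≥0∞ := fun x => ⨆ n, U n x with hUi
  have hUim : Measurable Ui := Measurable.iSup hUm
  have hfix : ∀ x, T Ui x = Ui x := by
    intro x
    have h1 : Ui x = ⨆ n, U (n + 1) x := ((hUmono x).iSup_nat_add 1).symm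
    rw [h1]
    simp only [hUs, hT]
    rw [← ENNReal.iSup_add, ← lintegral_iSup (fun n => hkm _ (hUm n) x)]
    · congr 1
      refine lintegral_congr fun y => ?_
      rw [← ENNReal.mul_iSup, ← ENNReal.mul_iSup]
      congr 2
      exact ((ENNReal.orderIsoRpow p hp).map_iSup fun n => U n y)
    · intro n k hnk y
      have := hUmono y hnk
      simp only at this ⊢
      gcongr
  have hUiw : ∀ᵐ x, Ui x ≤ ENNReal.ofReal (w x) := by
    filter_upwards [ae_all_iff.2 hUw] with x hx
    exact iSup_le hx
  have hof : ∀ᵐ x, ENNReal.ofReal (Ui x).toReal = Ui x := by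
    filter_upwards [hUiw] with x hx
    exact ENNReal.ofReal_toReal (hx.trans_lt ENNReal.ofReal_lt_top).ne
  refine ⟨fun x => (Ui x).toReal, ⟨hUim.ennreal_toReal, ?_, ?_⟩, ?_⟩
  · filter_upwards [hUiw, GammaConvMeas_pos hN hμ] with x hx hpos
    refine ENNReal.toReal_pos ?_ (hx.trans_lt ENNReal.ofReal_lt_top).ne
    rw [← hfix x]
    have : 0 < ENNReal.ofReal κ * GammaConvMeas N μ x :=
      ENNReal.mul_pos (by simpa using hκ) hpos.ne'
    exact (this.trans_le le_add_self).ne'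
  · filter_upwards [hof] with x hx
    rw [hx, hk _ (Eventually.of_forall fun y => ENNReal.toReal_nonneg)]
    conv_lhs => rw [← hfix x]
    simp only [hT]
    congr 1
    refine lintegral_congr_ae ?_
    filter_upwards [hof] with y hy
    rw [hy]
  · filter_upwards [hUiw, hw.2.1] with x hx hwx
    exact ENNReal.toReal_le_of_le_ofReal hwx.le hx

/-- The tangent line inequality for the convex function `s ↦ s ^ p`. -/
lemma rpow_tangent {p s t : ℝ} (hp : 1 < p) (hs : 0 < s) (ht : s ≤ t) :
    p * s ^ (p - 1) * (t - s) + s ^ p ≤ t ^ p := by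
  have h := one_add_mul_self_le_rpow_one_add (s := t / s - 1) (p := p)
    (by have : 0 ≤ t / s := div_nonneg (hs.le.trans ht) hs.le
        linarith) hp.le
  rw [add_sub_cancel, Real.div_rpow (hs.le.trans ht) hs.le] at h
  have hsp : 0 < s ^ p := Real.rpow_pos_of_pos hs p
  rw [le_div_iff₀ hsp] at h
  refine le_of_eq_of_le ?_ h
  rw [Real.rpow_sub_one hs.ne']
  field_simp
  ring

/-! ### The stability inequality -/

/-- **Lemma 5.4**: under the standing assumptions (H), if `0 < κ < κ'` and `(P_{κ'})` has a
solution, then the minimal solution `u^κ` of `(P_κ)` satisfies the stability-type inequality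
`∫ p α (u^κ)^{p-1} ψ² ≤ ∫ |∇ψ|²` for every smooth compactly supported `ψ`. -/
theorem minimal_solution_stability_inequality
    (N : ℕ) (hN : 3 ≤ N)
    (α : Euc N → ℝ) (a b : ℝ)
    (hα_cont : ContinuousOn α {(0 : Euc N)}ᶜ)
    (hα_pos : ∀ x : Euc N, x ≠ 0 → 0 < α x)
    (ha : -2 < a)
    (hα0 : ∃ C : ℝ, ∀ᶠ x : Euc N in nhdsWithin 0 {(0 : Euc N)}ᶜ, ‖x‖ ^ (-a) * α x ≤ C)
    (hαinf : ∃ C : ℝ, ∀ᶠ x : Euc N in comap (fun x : Euc N => ‖x‖) atTop, ‖x‖ ^ (-b) * α x ≤ C)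
    (p : ℝ) (r : ℝ≥0∞) (c d : ℝ)
    (hp1 : 1 < p) (hpr : ENNReal.ofReal p < r)
    (hpb : ((N : ℝ) + b) / ((N : ℝ) - 2) < p)
    (hrN : ENNReal.ofReal ((N : ℝ) * (p - 1) / 2) < r)
    (hc : -(a + 2) / (p - 1) < c)
    (hd : d < -(b + 2) / (p - 1))
    (μ : Measure (Euc N)) [IsLocallyFiniteMeasure μ] (hμ : μ ≠ 0)
    (hΓμ : MemW N r c d (fun x => (GammaConvMeas N μ x).toReal))
    (κ κ' : ℝ) (hκ : 0 < κ) (hκκ' : κ < κ')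
    (hsol' : ∃ w : Euc N → ℝ, IsSolution N α p μ κ' w)
    (u : Euc N → ℝ) (hu : IsMinSolution N α p μ κ u) :
    ∀ ψ : Euc N → ℝ, ContDiff ℝ (⊤ : ℕ∞) ψ → HasCompactSupport ψ →
      ∫⁻ x, ENNReal.ofReal (p * α x * u x ^ (p - 1) * ψ x ^ 2)
        ≤ ENNReal.ofReal (∫ x, ‖gradient ψ x‖ ^ 2) := by
  intro ψ hψ hψc
  have hψ1 : ContDiff ℝ 1 ψ := hψ.of_le (by exact_mod_cast le_top)
  have : Nontrivial (Euc N) := by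
    have : Nonempty (Fin N) := ⟨⟨0, by omega⟩⟩
    infer_instance
  obtain ⟨w, hw⟩ := hsol'
  classical
  -- The value of `α` at the origin is arbitrary; it is replaced by `0`.
  set A : Euc N → ℝ := ({(0 : Euc N)}ᶜ : Set (Euc N)).piecewise α (fun _ => 0) with hAdef
  have hA : Measurable A :=
    ContinuousOn.measurable_piecewise hα_cont continuousOn_const
      (measurableSet_singleton (0 : Euc N)).compl
  have hA0 : ∀ x, 0 ≤ A x := by
    intro x
    by_cases hx : x = 0
    · simp [hAdef, hx]
    · have hx' : x ∈ ({(0 : Euc N)}ᶜ : Set (Euc N)) := hx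
      rw [hAdef, Set.piecewise_eq_of_mem _ _ _ hx']
      exact (hα_pos x hx).le
  have hαA : α =ᵐ[volume] A := by
    filter_upwards [compl_mem_ae_iff.2 (measure_singleton (μ := (volume : Measure (Euc N))) 0)]
      with x hx
    rw [hAdef, Set.piecewise_eq_of_mem _ _ _ hx]
  obtain ⟨v, hv, hvw⟩ := exists_solution_le hN hA hA0 hαA (by linarith : 0 < p) hμ hκ hκκ'.le hw
  have huw : ∀ᵐ x, u x ≤ w x := by
    filter_upwards [hu.2 v hv, hvw] with x h1 h2
    exact h1.trans h2
  obtain ⟨hum, hu0, hueq⟩ := hu.1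
  obtain ⟨hwm, hw0, hweq⟩ := hw
  set V : Euc N → ℝ := fun x => p * A x * u x ^ (p - 1) with hV
  have hVm : Measurable V := (hA.const_mul p).mul (hum.pow_const _)
  have hzm : Measurable fun x => w x - u x := hwm.sub hum
  have hV0 : ∀ᵐ x, 0 ≤ V x := by
    filter_upwards [hu0] with x hx
    have := hA0 x
    have := Real.rpow_nonneg hx.le (p - 1)
    simp only [hV]; positivity
  -- Convexity bounds the nonlinear term for `w` from below by its linearisation at `u`.
  have hconv : ∀ x, GammaConvFn N (fun y => V y * (w y - u y)) x
      + GammaConvFn N (fun y => α y * u y ^ p) x ≤ GammaConvFn N (fun y => α y * w y ^ p) x := by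
    intro x
    unfold GammaConvFn
    rw [← lintegral_add_left]
    · refine lintegral_mono_ae ?_
      filter_upwards [huw, hu0, hV0, hαA] with y h1 h2 h3 h4
      rw [← mul_add, ← ENNReal.ofReal_add (mul_nonneg h3 (by linarith))
        (by rw [h4]; exact mul_nonneg (hA0 y) (Real.rpow_nonneg h2.le _))]
      gcongr
      have := mul_le_mul_of_nonneg_left (rpow_tangent hp1 h2 h1) (hA0 y)
      simp only [hV, h4]
      linarith
    · exact ((fundSol_measurable.comp (measurable_const.sub measurable_id)).ennreal_ofReal).mul
        (hVm.mul hzm).ennreal_ofReal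
  have hmain : ∀ᵐ x, GammaConvFn N (fun y => V y * (w y - u y)) x
      + ENNReal.ofReal (κ' - κ) * GammaConvMeas N μ x ≤ ENNReal.ofReal (w x - u x) := by
    filter_upwards [hueq, hweq, hu0] with x h1 h2 h3
    rw [ENNReal.ofReal_sub _ h3.le]
    refine ENNReal.le_sub_of_add_le_right ENNReal.ofReal_ne_top ?_
    rw [h2, h1]
    have e : ENNReal.ofReal κ' = ENNReal.ofReal (κ' - κ) + ENNReal.ofReal κ := by
      rw [← ENNReal.ofReal_add (by linarith) hκ.le]; congr 1; ring
    rw [e, add_mul, add_add_add_comm]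
    gcongr
    exact hconv x
  have hz0 : ∀ᵐ x, 0 < w x - u x := by
    filter_upwards [hmain, GammaConvMeas_pos hN hμ] with x h1 h2
    have h3 : 0 < ENNReal.ofReal (κ' - κ) * GammaConvMeas N μ x :=
      ENNReal.mul_pos (by simpa using hκκ') h2.ne'
    exact ENNReal.ofReal_pos.1 (h3.trans_le (le_add_self.trans h1))
  have hsup : ∀ᵐ x, GammaConvFn N (fun y => V y * (w y - u y)) x ≤ ENNReal.ofReal (w x - u x) :=
    hmain.mono fun x hx => le_self_add.trans hx
  refine le_of_eq_of_le (lintegral_congr_ae ?_)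
    (hardy_supersolution hN hVm hzm hV0 hz0 hsup hψ1 hψc)
  filter_upwards [hαA] with x hx
  simp only [hV, hx]
end
end

section
/- Let N ≥ 3 be an integer, let a > -2, and set a_- := min{a,0}. Then for a real number p the following are equivalent: (i) there exists ν > 1 such that ν²/(2ν-1) < p < 1 + 2(2+a_-)ν/(N-2); (ii) 1 < p < p^*(a_-), where p^*(η) := 1 + 2(η+2)/(N-η-4-√((η+2)(2N+η-2))) if N > 10+4η, and p^*(η) := ∞ otherwise (in which case condition (ii) is just 1 < p). -/
/-!
Put `b = η + 2`, `M = N - 2`, `q = p - 1`. The two inequalities on `ν` read `(ν - 1)² < q (2ν - 1)`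
and `q M < 2 b ν`. For `ν > 1` the first one means `ν < 1 + q + √(q² + q)`, the larger root of
`(ν - 1)² = q (2ν - 1)`, so a suitable `ν` exists exactly when `q M / (2b)` lies below that root.

Eliminating `q` gives the quadratic `M (ν - 1)² - 2 b ν (2ν - 1)`. It is negative for all `ν ≥ 1` if
`M ≤ 4b`. If `M > 4b`, multiplication by `M` makes it factor as `(ν D - M) (ν E - M)` with
`D = M - b - √(b (2M + b))` and `E = M - b + √(b (2M + b))`; as `E > M`, for `ν ≥ 1` it is negative
exactly when `ν D < M`. At the threshold `ν = q M / (2b)` this is `q < 2 b / D = p^* - 1`.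
-/

open ENNReal

noncomputable section

/-- The Joseph–Lundgren type exponent `p^*(η)` (`= ∞` if `N ≤ 10 + 4η`). -/
def pStarSup (N : ℕ) (η : ℝ) : ℝ≥0∞ :=
  if 10 + 4 * η < (N : ℝ) then
    ENNReal.ofReal
      (1 + 2 * (η + 2) / ((N : ℝ) - η - 4 - Real.sqrt ((η + 2) * (2 * (N : ℝ) + η - 2))))
  else ⊤

/-- The exponent `p_*(η)` (`= 1` if `η ≤ -2`). -/
def pStarInf (N : ℕ) (η : ℝ) : ℝ :=
  if -2 < η then
    1 + 2 * (η + 2) / ((N : ℝ) - η - 4 + Real.sqrt ((η + 2) * (2 * (N : ℝ) + η - 2)))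
  else 1

/-- The factorisation of the quadratic obtained by eliminating `q`, where `s` stands for
`√(b (2M + b))`. -/
lemma quadratic_factor {M b s : ℝ} (hs : s ^ 2 = b * (2 * M + b)) (x : ℝ) :
    (x * (M - b - s) - M) * (x * (M - b + s) - M)
      = M * (M * (x - 1) ^ 2 - 2 * b * x * (2 * x - 1)) := by
  linear_combination (-x ^ 2) * hs

/-- Necessity of the upper bound on `q`, with `D = M - b - s > 0`. -/
lemma mul_lt_of_exists {M b s q ν : ℝ} (hM : 0 < M) (hb : 0 < b) (hs0 : 0 ≤ s)
    (hs : s ^ 2 = b * (2 * M + b)) (hD : 0 < M - b - s) (hν : 1 < ν)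
    (h1 : (ν - 1) ^ 2 < q * (2 * ν - 1)) (h2 : q * M < 2 * b * ν) :
    q * (M - b - s) < 2 * b := by
  have hQ : M * (ν - 1) ^ 2 - 2 * b * ν * (2 * ν - 1) < 0 := by
    have e1 := mul_lt_mul_of_pos_left h1 hM
    have e2 := mul_lt_mul_of_pos_right h2 (show 0 < 2 * ν - 1 by linarith)
    linarith
  have hνD : ν * (M - b - s) < M := by
    by_contra! h
    have hE : M ≤ ν * (M - b + s) := by nlinarith
    have e := mul_nonneg (sub_nonneg.2 h) (sub_nonneg.2 hE)
    rw [quadratic_factor hs] at e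
    linarith [mul_neg_of_pos_of_neg hM hQ]
  have e1 := mul_lt_mul_of_pos_right h2 hD
  have e2 := mul_lt_mul_of_pos_left hνD (show 0 < 2 * b by linarith)
  exact lt_of_mul_lt_mul_right (by linarith : q * (M - b - s) * M < 2 * b * M) hM.le

/-- Beyond `x = 1`, the quadratic is negative in the subcritical range. -/
lemma quadratic_neg {M b s x : ℝ} (hM : 0 < M) (hb : 0 < b) (hs0 : 0 ≤ s)
    (hs : s ^ 2 = b * (2 * M + b)) (hx : 1 < x)
    (h : M ≤ 4 * b ∨ x * (M - b - s) < M) :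
    M * (x - 1) ^ 2 - 2 * b * x * (2 * x - 1) < 0 := by
  rcases h with h | h
  · have e := mul_le_mul_of_nonneg_right h (sq_nonneg (x - 1))
    nlinarith [mul_pos hb (sub_pos.2 hx)]
  · have hsb : b < s := lt_of_pow_lt_pow_left₀ 2 hs0 (by nlinarith [mul_pos hb hM])
    have hE : M < x * (M - b + s) := by nlinarith
    have e := mul_neg_of_neg_of_pos (sub_neg.2 h) (sub_pos.2 hE)
    rw [quadratic_factor hs] at e
    exact (pos_iff_neg_of_mul_neg e).1 hM

/-- Sufficiency: `ν` is found strictly between `max 1 (q M / (2b))` and the larger root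
`1 + q + √(q² + q)`. -/
lemma exists_of_mul_lt {M b s q : ℝ} (hM : 0 < M) (hb : 0 < b) (hs0 : 0 ≤ s)
    (hs : s ^ 2 = b * (2 * M + b)) (hq : 0 < q)
    (h : M ≤ 4 * b ∨ q * (M - b - s) < 2 * b) :
    ∃ ν : ℝ, 1 < ν ∧ (ν - 1) ^ 2 < q * (2 * ν - 1) ∧ q * M < 2 * b * ν := by
  obtain ⟨r, hr, hr2⟩ : ∃ r : ℝ, 0 ≤ r ∧ r ^ 2 = q ^ 2 + q :=
    ⟨√(q ^ 2 + q), Real.sqrt_nonneg _, Real.sq_sqrt (by positivity)⟩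
  have hrq : q < r := lt_of_pow_lt_pow_left₀ 2 hr (by linarith)
  obtain ⟨x, hx⟩ : ∃ x : ℝ, q * M = 2 * b * x := ⟨q * M / (2 * b), by field_simp⟩
  have hxr : x < 1 + q + r := by
    by_contra! hge
    have hx1 : 1 < x := by linarith
    have hQ := quadratic_neg hM hb hs0 hs hx1 (h.imp_right fun h => by
      have e := mul_lt_mul_of_pos_right h hM
      have e' : 2 * b * (x * (M - b - s)) < 2 * b * M := by
        linear_combination e + (M - b - s) * (-hx)
      exact lt_of_mul_lt_mul_left e' (by linarith))
    have hge' : r ^ 2 ≤ (x - 1 - q) ^ 2 := pow_le_pow_left₀ hr (by linarith) 2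
    have e : q * (2 * x - 1) ≤ (x - 1) ^ 2 := by linarith
    have e2 := mul_le_mul_of_nonneg_left e hM.le
    have e3 : M * (q * (2 * x - 1)) = 2 * b * x * (2 * x - 1) := by
      linear_combination (2 * x - 1) * hx
    linarith
  obtain ⟨ν, hν, hν'⟩ := exists_between (max_lt (show 1 < 1 + q + r by linarith) hxr)
  obtain ⟨hν1, hνx⟩ := max_lt_iff.1 hν
  refine ⟨ν, hν1, ?_, ?_⟩
  · have e : (ν - 1 - q) ^ 2 < r ^ 2 := sq_lt_sq' (by linarith) (by linarith)
    linarith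
  · rw [hx]
    exact mul_lt_mul_of_pos_left hνx (by linarith)

/-- **Lemma 7.1 (i)**: for `a > -2` and `a_- = min{a,0}`, there exists `ν > 1` with
`ν²/(2ν-1) < p < 1 + 2(2+a_-)ν/(N-2)` if and only if `1 < p < p^*(a_-)`. -/
theorem exists_nu_iff_lt_pStarSup
    (N : ℕ) (hN : 3 ≤ N) (a : ℝ) (ha : -2 < a) (p : ℝ) :
    (∃ ν : ℝ, 1 < ν ∧ ν ^ 2 / (2 * ν - 1) < p ∧
        p < 1 + 2 * (2 + min a 0) * ν / ((N : ℝ) - 2))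
      ↔ (1 < p ∧ ENNReal.ofReal p < pStarSup N (min a 0)) := by
  have hη : -2 < min a 0 := lt_min ha (by norm_num)
  generalize min a 0 = η at hη ⊢
  have hN' : (3 : ℝ) ≤ N := by exact_mod_cast hN
  have hM : (0 : ℝ) < N - 2 := by linarith
  have hb : 0 < η + 2 := by linarith
  have hrad : 0 ≤ (η + 2) * (2 * (N : ℝ) + η - 2) := mul_nonneg hb.le (by linarith)
  unfold pStarSup
  obtain ⟨s, hsdef⟩ : ∃ s, s = √((η + 2) * (2 * (N : ℝ) + η - 2)) := ⟨_, rfl⟩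
  rw [← hsdef]
  have hs0 : 0 ≤ s := hsdef ▸ Real.sqrt_nonneg _
  have hs : s ^ 2 = (η + 2) * (2 * ((N : ℝ) - 2) + (η + 2)) := by
    rw [hsdef, Real.sq_sqrt hrad]; ring
  have hDeq : (N : ℝ) - η - 4 - s = (N - 2) - (η + 2) - s := by ring
  have hDpos (hc : 10 + 4 * η < (N : ℝ)) : 0 < (N : ℝ) - 2 - (η + 2) - s := by
    have : s < N - 2 - (η + 2) := lt_of_pow_lt_pow_left₀ 2 (by linarith) (by
      nlinarith [mul_pos hM (show 0 < (N : ℝ) - 2 - 4 * (η + 2) by linarith)])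
    linarith
  -- For `p > 1` the bound `p < p^*` is the alternative used in the lemmas above.
  have hstar (hp : 1 < p) :
      (ENNReal.ofReal p < if 10 + 4 * η < (N : ℝ) then
          ENNReal.ofReal (1 + 2 * (η + 2) / ((N : ℝ) - η - 4 - s)) else ⊤) ↔
        ((N : ℝ) - 2 ≤ 4 * (η + 2) ∨ (p - 1) * (N - 2 - (η + 2) - s) < 2 * (η + 2)) := by
    split_ifs with hc
    · rw [ENNReal.ofReal_lt_ofReal_iff_of_nonneg (by linarith), hDeq, ← sub_lt_iff_lt_add',
        lt_div_iff₀ (hDpos hc)]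
      exact ⟨Or.inr, fun h => h.resolve_left (by linarith)⟩
    · exact iff_of_true ENNReal.ofReal_lt_top (Or.inl (by linarith))
  have hν {ν : ℝ} (h : 1 < ν) : (ν ^ 2 / (2 * ν - 1) < p ∧
      p < 1 + 2 * (2 + η) * ν / ((N : ℝ) - 2)) ↔
      ((ν - 1) ^ 2 < (p - 1) * (2 * ν - 1) ∧ (p - 1) * (N - 2) < 2 * (η + 2) * ν) := by
    rw [div_lt_iff₀ (by linarith), ← sub_lt_iff_lt_add', lt_div_iff₀ hM, add_comm 2 η]
    refine and_congr_left fun _ => ?_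
    constructor <;> intro h <;> linarith
  constructor
  · rintro ⟨ν, h1, h⟩
    obtain ⟨h2, h3⟩ := (hν h1).1 h
    have hp : 1 < p := sub_pos.1
      (pos_of_mul_pos_left ((sq_nonneg _).trans_lt h2) (by linarith))
    refine ⟨hp, (hstar hp).2 ?_⟩
    rcases le_or_gt ((N : ℝ) - 2) (4 * (η + 2)) with hc | hc
    · exact Or.inl hc
    · exact Or.inr (mul_lt_of_exists hM hb hs0 hs (hDpos (by linarith)) h1 h2 h3)
  · rintro ⟨hp, h⟩
    obtain ⟨ν, h1, h2⟩ := exists_of_mul_lt hM hb hs0 hs (sub_pos.2 hp) ((hstar hp).1 h)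
    exact ⟨ν, h1, (hν h1).2 h2⟩
end
end

section
/- Let N ≥ 3 be an integer, let b ∈ ℝ, let p be a real number, and set a^♯ := (N-2)(p-1)-4-b and (a^♯)_- := min{a^♯,0}. Then the following are equivalent: (i) there exists ν > 1 such that ν²/(2ν-1) < p < 1 + 2(2+(a^♯)_-)ν/(N-2); (ii) p_*(b) < p < p^*(0), where p^*(0) := 1 + 4/(N-4-√(4N-4)) if N > 10 and p^*(0) := ∞ otherwise, and p_*(η) := 1 + 2(η+2)/(N-η-4+√((η+2)(2N+η-2))) if η > -2 and p_*(η) := 1 otherwise. -/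
/-!
For `p > 1` put `s = √((p - 1) / p) ∈ (0, 1)`, so that `p (1 - s²) = 1` and
`(p - 1) (1 - s²) = s²`. In this parameter the inequality `ν² / (2ν - 1) < p` becomes
`(ν - 1)² < (s ν)²`, i.e. `ν (1 - s) < 1` (for `ν > 1`), and the upper bound on `p` is a
lower bound on `ν` (it forces the minimum to be positive). So a suitable `ν` exists iff the
lower bound holds strictly at `ν = 1 / (1 - s)`.
With `M = N - 2` and `β = b + 2` this amounts to the two quadratic inequalities
`2 β (1 - s) < M s²` and `M s² < 4 (1 + s)` (`exists_nu_iff_quadratic`).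
Solving them for `s`, the first one says `p_*(b) < p` (`pStarInf_lt_iff_quadratic`) and the
second one `p < p^*(0)` (`lt_pStarSup_iff_quadratic`).
-/

open ENNReal

noncomputable section

/-- Elimination of `ν`; here `p = 1 + q` and `s` is the parameter with `q (1 - s²) = s²`. -/
lemma exists_nu_iff_quadratic (M β q s : ℝ) (hM : 1 ≤ M) (hs0 : 0 < s) (hs1 : s < 1)
    (hq : q * (1 - s ^ 2) = s ^ 2) :
    (∃ ν : ℝ, 1 < ν ∧ ν ^ 2 / (2 * ν - 1) < 1 + q ∧ M * q < 2 * min (M * q - β) 2 * ν)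
      ↔ (2 * β * (1 - s) < M * s ^ 2 ∧ M * s ^ 2 < 4 * (1 + s)) := by
  have h1s : 0 < 1 - s ^ 2 := by nlinarith
  have hqs : q * (1 - s) * (1 + s) = s ^ 2 := by rw [← hq]; ring
  have hq0 : 0 < q := by
    by_contra! h
    nlinarith [sq_pos_of_pos hs0]
  have hMq : 0 < M * q := by positivity
  -- The first inequality on `ν` bounds it by the larger root `1 / (1 - s)`.
  have key : ∀ ν : ℝ, 1 < ν → (ν ^ 2 / (2 * ν - 1) < 1 + q ↔ ν * (1 - s) < 1) := by
    intro ν hν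
    rw [div_lt_iff₀ (by linarith), ← mul_lt_mul_iff_left₀ h1s]
    have e : (1 + q) * (2 * ν - 1) * (1 - s ^ 2) = 2 * ν - 1 := by
      linear_combination (2 * ν - 1) * hq
    rw [e]
    have hsν : 0 < s * ν := by positivity
    constructor
    · intro h
      have : ν - 1 < s * ν := lt_of_pow_lt_pow_left₀ 2 hsν.le (by nlinarith)
      linarith
    · intro h
      have : (ν - 1) ^ 2 < (s * ν) ^ 2 :=
        pow_lt_pow_left₀ (by linarith) (by linarith) two_ne_zero
      nlinarith
  -- The second inequality at `ν = 1 / (1 - s)` is the pair of quadratic inequalities.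
  have key2 : M * q * (1 - s) < 2 * min (M * q - β) 2 ↔
      (2 * β * (1 - s) < M * s ^ 2 ∧ M * s ^ 2 < 4 * (1 + s)) := by
    have h2 : (0:ℝ) < 2 := two_pos
    rw [mul_min_of_nonneg _ _ h2.le, lt_min_iff]
    refine and_congr ?_ ?_
    · have e : M * s ^ 2 - 2 * β * (1 - s) =
          (1 - s) * (2 * (M * q - β) - M * q * (1 - s)) := by
        linear_combination (-M) * hq
      have h1 : 0 < 1 - s := by linarith
      rw [← sub_pos, ← sub_pos (a := M * s ^ 2), e, mul_pos_iff_of_pos_left h1]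
    · have h1 : 0 < 1 + s := by linarith
      rw [← mul_lt_mul_iff_left₀ h1]
      have e : M * q * (1 - s) * (1 + s) = M * s ^ 2 := by linear_combination M * hqs
      rw [e]
      constructor <;> intro h <;> linarith
  rw [← key2]
  set m := min (M * q - β) 2
  constructor
  · rintro ⟨ν, hν, h1, h2⟩
    rw [key ν hν] at h1
    have hm : 0 < m := by
      by_contra! h
      nlinarith
    nlinarith
  · intro h
    have h1 : 0 < 1 - s := by linarith
    have hm : 0 < m := by
      have : 0 < M * q * (1 - s) := by positivity
      linarith
    have hlt : max 1 (M * q / (2 * m)) < 1 / (1 - s) := by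
      rw [max_lt_iff, lt_div_iff₀ h1, div_lt_div_iff₀ (by positivity) h1]
      constructor <;> linarith
    obtain ⟨ν, h3, h4⟩ := exists_between hlt
    rw [max_lt_iff, div_lt_iff₀ (by positivity)] at h3
    rw [lt_div_iff₀ h1] at h4
    exact ⟨ν, h3.1, (key ν h3.1).2 h4, by linarith⟩

/-- For `b > -2`, `p_*(b)` solves `2 β (1 - s) = M s²`, where `M = N - 2`, `β = b + 2`;
for `b ≤ -2` both sides hold. -/
lemma pStarInf_lt_iff_quadratic (N : ℕ) (hN : 3 ≤ N) (b q s : ℝ) (hs0 : 0 < s) (hs1 : s < 1)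
    (hq : q * (1 - s ^ 2) = s ^ 2) :
    pStarInf N b < 1 + q ↔ 2 * (b + 2) * (1 - s) < ((N : ℝ) - 2) * s ^ 2 := by
  have hM : (3 : ℝ) ≤ N := by exact_mod_cast hN
  have h1s : 0 < 1 - s ^ 2 := by nlinarith
  have hq0 : 0 < q := by
    by_contra! h
    nlinarith [sq_pos_of_pos hs0]
  obtain ⟨M, hMN⟩ : ∃ M : ℝ, M = (N : ℝ) - 2 := ⟨_, rfl⟩
  obtain ⟨β, hβ⟩ : ∃ β : ℝ, β = b + 2 := ⟨_, rfl⟩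
  have hM1 : 1 ≤ M := by linarith
  unfold pStarInf
  split_ifs with hb
  · have hβ0 : 0 < β := by linarith
    rw [show (b + 2) * (2 * (N : ℝ) + b - 2) = β ^ 2 + 2 * M * β by rw [hMN, hβ]; ring,
      show (N : ℝ) - b - 4 = M - β by rw [hMN, hβ]; ring, ← hMN, ← hβ]
    have hR2 := Real.sq_sqrt (show 0 ≤ β ^ 2 + 2 * M * β by positivity)
    have hR0 := Real.sqrt_nonneg (β ^ 2 + 2 * M * β)
    set R := √(β ^ 2 + 2 * M * β)
    have hRβ : β < R := lt_of_pow_lt_pow_left₀ 2 hR0 (by nlinarith)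
    have hRM : R < M + β := lt_of_pow_lt_pow_left₀ 2 (by positivity) (by nlinarith)
    have a1 : 1 + 2 * β / (M - β + R) < 1 + q ↔ 2 * β < q * (M - β + R) := by
      rw [add_lt_add_iff_left, div_lt_iff₀ (by linarith)]
    have a2 : 2 * β < q * (M - β + R) ↔ 0 < (s * M) ^ 2 - (R - β) ^ 2 := by
      have e : (s * M) ^ 2 - (R - β) ^ 2 =
          (1 - s ^ 2) * (M + β - R) * (q * (M - β + R) - 2 * β) := by
        linear_combination (-(M + β - R) * (M - β + R)) * hq + (-(1 - s ^ 2)) * hR2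
      rw [e, mul_pos_iff_of_pos_left (mul_pos h1s (by linarith)), sub_pos]
    have a3 : 0 < (s * M) ^ 2 - (R - β) ^ 2 ↔ R < s * M + β := by
      rw [sub_pos, pow_lt_pow_iff_left₀ (by linarith) (by positivity) two_ne_zero]
      constructor <;> intro h <;> linarith
    have a4 : R < s * M + β ↔ 2 * β * (1 - s) < M * s ^ 2 := by
      rw [← pow_lt_pow_iff_left₀ hR0 (by positivity) two_ne_zero, hR2, ← sub_pos,
        ← sub_pos (a := M * s ^ 2),
        show (s * M + β) ^ 2 - (β ^ 2 + 2 * M * β) = M * (M * s ^ 2 - 2 * β * (1 - s)) by ring,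
        mul_pos_iff_of_pos_left (by linarith)]
    rw [a1, a2, a3, a4]
  · rw [← hMN, ← hβ]
    have : 0 < M * s ^ 2 := by positivity
    have : β * (1 - s) ≤ 0 := mul_nonpos_of_nonpos_of_nonneg (by linarith) (by linarith)
    constructor <;> intro _ <;> linarith

/-- `p^*(0)` solves `M s² = 4 (1 + s)`, where `M = N - 2`; for `M ≤ 8` there is no root `s < 1`. -/
lemma lt_pStarSup_iff_quadratic (N : ℕ) (q s : ℝ) (hs0 : 0 < s) (hs1 : s < 1)
    (hq : q * (1 - s ^ 2) = s ^ 2) :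
    ENNReal.ofReal (1 + q) < pStarSup N 0 ↔ ((N : ℝ) - 2) * s ^ 2 < 4 * (1 + s) := by
  have h1s : 0 < 1 - s ^ 2 := by nlinarith
  obtain ⟨M, hMN⟩ : ∃ M : ℝ, M = (N : ℝ) - 2 := ⟨_, rfl⟩
  unfold pStarSup
  rw [← hMN]
  split_ifs with hb
  · have hM8 : 8 < M := by linarith
    rw [show ((0:ℝ) + 2) * (2 * (N : ℝ) + 0 - 2) = 4 * M + 4 by rw [hMN]; ring,
      show (N : ℝ) - 0 - 4 = M - 2 by rw [hMN]; ring,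
      show (2:ℝ) * (0 + 2) = 4 by norm_num]
    have hT2 := Real.sq_sqrt (show 0 ≤ 4 * M + 4 by linarith)
    have hT0 := Real.sqrt_nonneg (4 * M + 4)
    set T := √(4 * M + 4)
    have hTM : T < M - 2 := lt_of_pow_lt_pow_left₀ 2 (by linarith) (by nlinarith)
    have hD : 0 < M - 2 - T := by linarith
    have a1 : ENNReal.ofReal (1 + q) < ENNReal.ofReal (1 + 4 / (M - 2 - T)) ↔
        q * (M - 2 - T) < 4 := by
      rw [ENNReal.ofReal_lt_ofReal_iff (by positivity), add_lt_add_iff_left, lt_div_iff₀ hD]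
    have a2 : q * (M - 2 - T) < 4 ↔ 0 < (2 + T) ^ 2 - (s * M) ^ 2 := by
      have e : (2 + T) ^ 2 - (s * M) ^ 2 =
          (1 - s ^ 2) * (M + 2 + T) * (4 - q * (M - 2 - T)) := by
        linear_combination ((M + 2 + T) * (M - 2 - T)) * hq + (1 - s ^ 2) * hT2
      rw [e, mul_pos_iff_of_pos_left (mul_pos h1s (by linarith)), sub_pos]
    have a3 : 0 < (2 + T) ^ 2 - (s * M) ^ 2 ↔ s * M < 2 + T := by
      rw [sub_pos, pow_lt_pow_iff_left₀ (by positivity) (by linarith) two_ne_zero]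
    have a4 : s * M < 2 + T ↔ M * s ^ 2 < 4 * (1 + s) := by
      -- `(s M - 2)² < T²` is `M` times the quadratic inequality.
      have e : (4 * M + 4) - (s * M - 2) ^ 2 = M * (4 * (1 + s) - M * s ^ 2) := by ring
      have hM0 : 0 < M := by linarith
      constructor
      · intro h
        rcases le_or_gt (s * M) 2 with h2 | h2
        · nlinarith
        · have h3 : (s * M - 2) ^ 2 < T ^ 2 :=
            pow_lt_pow_left₀ (by linarith) (by linarith) two_ne_zero
          rw [hT2, ← sub_pos, e, mul_pos_iff_of_pos_left hM0] at h3
          linarith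
      · intro h
        have h3 : 0 < M * (4 * (1 + s) - M * s ^ 2) := mul_pos hM0 (by linarith)
        have h4 : s * M - 2 < T := lt_of_pow_lt_pow_left₀ 2 hT0 (by linarith)
        linarith
    rw [a1, a2, a3, a4]
  · have hM8 : M ≤ 8 := by linarith
    refine iff_of_true ENNReal.ofReal_lt_top ?_
    nlinarith [mul_le_mul_of_nonneg_right hM8 (sq_nonneg s)]

lemma one_le_pStarInf (N : ℕ) (hN : 3 ≤ N) (b : ℝ) : 1 ≤ pStarInf N b := by
  have hM : (3 : ℝ) ≤ N := by exact_mod_cast hN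
  unfold pStarInf
  split_ifs with hb
  · have : b + 2 ≤ √((b + 2) * (2 * (N : ℝ) + b - 2)) :=
      Real.le_sqrt_of_sq_le (by nlinarith)
    have : 0 ≤ 2 * (b + 2) / ((N : ℝ) - b - 4 + √((b + 2) * (2 * (N : ℝ) + b - 2))) :=
      div_nonneg (by linarith) (by linarith)
    linarith
  · exact le_rfl

/-- **Lemma 7.1 (ii)**: with `a^♯ = (N-2)(p-1)-4-b`, there exists `ν > 1` with
`ν²/(2ν-1) < p < 1 + 2(2+(a^♯)_-)ν/(N-2)` if and only if `p_*(b) < p < p^*(0)`. -/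
theorem exists_nu_iff_between_pStarInf_pStarSup
    (N : ℕ) (hN : 3 ≤ N) (b p : ℝ) :
    (∃ ν : ℝ, 1 < ν ∧ ν ^ 2 / (2 * ν - 1) < p ∧
        p < 1 + 2 * (2 + min (((N : ℝ) - 2) * (p - 1) - 4 - b) 0) * ν / ((N : ℝ) - 2))
      ↔ (pStarInf N b < p ∧ ENNReal.ofReal p < pStarSup N 0) := by
  have hM : (3 : ℝ) ≤ N := by exact_mod_cast hN
  -- Both sides force `1 < p`.
  by_cases hp : 1 < p
  · have h01 : 0 < (p - 1) / p := div_pos (by linarith) (by linarith)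
    have hs0 : 0 < √((p - 1) / p) := Real.sqrt_pos.2 h01
    have hs1 : √((p - 1) / p) < 1 := by
      rw [Real.sqrt_lt' one_pos, div_lt_iff₀ (by linarith)]
      linarith
    have hs2 := Real.sq_sqrt h01.le
    set s := √((p - 1) / p)
    have hq : (p - 1) * (1 - s ^ 2) = s ^ 2 := by
      rw [hs2]
      field_simp
      ring
    have hmain := exists_nu_iff_quadratic ((N : ℝ) - 2) (b + 2) (p - 1) s (by linarith) hs0 hs1 hq
    have hinf := pStarInf_lt_iff_quadratic N hN b (p - 1) s hs0 hs1 hq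
    have hsup := lt_pStarSup_iff_quadratic N (p - 1) s hs0 hs1 hq
    rw [add_sub_cancel] at hmain hinf hsup
    rw [hinf, hsup, ← hmain]
    refine exists_congr fun ν => and_congr_right fun _ => and_congr_right fun _ => ?_
    rw [← min_add_add_left, ← sub_lt_iff_lt_add', lt_div_iff₀ (by linarith),
      show 2 + (((N : ℝ) - 2) * (p - 1) - 4 - b) = ((N : ℝ) - 2) * (p - 1) - (b + 2) by ring,
      add_zero, mul_comm (p - 1)]
  · refine iff_of_false ?_ fun h => hp ((one_le_pStarInf N hN b).trans_lt h.1)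
    rintro ⟨ν, hν, h1, -⟩
    rw [div_lt_iff₀ (by linarith)] at h1
    nlinarith [sq_nonneg (ν - 1)]
end
end

section
/- Let p > 1 be a real number. Then for all real numbers s, t, v > 0 one has (s+t+v)^p - (t+v)^p - (s+v)^p + v^p ≤ p(p-1) · max{(s+t+v)^{p-2}, v^{p-2}} · s · t. (Indeed, the left-hand side equals ∫_0^t ∫_0^s p(p-1)(σ+τ+v)^{p-2} dσ dτ.) -/
open intervalIntegral

/-! The identity is the fundamental theorem of calculus applied twice: with exponent `p - 1` in `σ`
and then with exponent `p` in `τ` (`integral_mul_shift_rpow`), using that `x ↦ x ^ q` is smooth on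
`x > 0`. The inequality then follows by bounding the integrand by a constant: on `[v, s + t + v]`
the monotone function `x ↦ x ^ (p - 2)` is at most its larger endpoint value
(`rpow_le_max_endpoints`). -/

/-- Stated with the bounds on `x` to cover both signs of `r`: a real power is increasing for
`0 ≤ r` and decreasing for `r ≤ 0`. -/
lemma rpow_le_max_endpoints {r a b x : ℝ} (ha : 0 < a) (hax : a ≤ x) (hxb : x ≤ b) :
    x ^ r ≤ max (b ^ r) (a ^ r) := by
  rcases le_total 0 r with hr | hr
  · exact le_max_of_le_left (Real.rpow_le_rpow (ha.le.trans hax) hxb hr)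
  · exact le_max_of_le_right (Real.rpow_le_rpow_of_nonpos ha hax hr)

lemma intervalIntegrable_shift_rpow (q : ℝ) {a c : ℝ} (ha : 0 ≤ a) (hc : 0 < c) :
    IntervalIntegrable (fun x : ℝ => q * (x + c) ^ (q - 1)) MeasureTheory.volume 0 a := by
  apply ContinuousOn.intervalIntegrable
  rw [Set.uIcc_of_le ha]
  refine continuousOn_const.mul (ContinuousOn.rpow_const (by fun_prop) fun x hx => Or.inl ?_)
  linarith [hx.1]

lemma integral_mul_shift_rpow (q : ℝ) {a c : ℝ} (ha : 0 ≤ a) (hc : 0 < c) :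
    ∫ x in (0:ℝ)..a, q * (x + c) ^ (q - 1) = (a + c) ^ q - c ^ q := by
  have h := integral_eq_sub_of_hasDerivAt (a := 0) (b := a) (f := fun x : ℝ => (x + c) ^ q)
    (f' := fun x => q * (x + c) ^ (q - 1)) (fun x hx => ?_) (intervalIntegrable_shift_rpow q ha hc)
  · simpa using h
  · rw [Set.uIcc_of_le ha] at hx
    have hx0 : x + c ≠ 0 := by linarith [hx.1]
    simpa using ((hasDerivAt_id x).add_const c).rpow_const (p := q) (Or.inl hx0)

/-- The elementary inequality (7.14): for `p > 1` and `s, t, v > 0`,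
`(s+t+v)^p - (t+v)^p - (s+v)^p + v^p = ∫_0^t ∫_0^s p(p-1)(σ+τ+v)^{p-2} dσ dτ`
and this is at most `p(p-1) max{(s+t+v)^{p-2}, v^{p-2}} s t`. -/
theorem rpow_second_difference_estimate
    (p : ℝ) (hp : 1 < p) (s t v : ℝ) (hs : 0 < s) (ht : 0 < t) (hv : 0 < v) :
    (s + t + v) ^ p - (t + v) ^ p - (s + v) ^ p + v ^ p
        = ∫ τ in (0:ℝ)..t, ∫ σ in (0:ℝ)..s, p * (p - 1) * (σ + τ + v) ^ (p - 2) ∧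
      (s + t + v) ^ p - (t + v) ^ p - (s + v) ^ p + v ^ p
        ≤ p * (p - 1) * max ((s + t + v) ^ (p - 2)) (v ^ (p - 2)) * s * t := by
  have key : (s + t + v) ^ p - (t + v) ^ p - (s + v) ^ p + v ^ p
      = ∫ τ in (0:ℝ)..t, ∫ σ in (0:ℝ)..s, p * (p - 1) * (σ + τ + v) ^ (p - 2) := by
    have inner : ∀ τ ∈ Set.uIcc 0 t,
        ∫ σ in (0:ℝ)..s, p * (p - 1) * (σ + τ + v) ^ (p - 2)
          = p * (τ + (s + v)) ^ (p - 1) - p * (τ + v) ^ (p - 1) := by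
      intro τ hτ
      rw [Set.uIcc_of_le ht.le] at hτ
      have h := integral_mul_shift_rpow (p - 1) hs.le (c := τ + v) (by linarith [hτ.1])
      rw [show p - 1 - 1 = p - 2 by ring] at h
      simp only [mul_assoc, add_assoc, integral_const_mul] at h ⊢
      rw [h, show τ + (s + v) = s + (τ + v) by ring]
      ring
    rw [integral_congr inner,
      integral_sub (intervalIntegrable_shift_rpow p ht.le (by linarith))
        (intervalIntegrable_shift_rpow p ht.le hv),
      integral_mul_shift_rpow p ht.le (by linarith), integral_mul_shift_rpow p ht.le hv,
      show t + (s + v) = s + t + v by ring]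
    ring
  refine ⟨key, ?_⟩
  rw [key]
  have hpp : 0 ≤ p * (p - 1) := mul_nonneg (by linarith) (by linarith)
  -- The norm bounds need no integrability of the inner integral as a function of `τ`.
  have bound := norm_integral_le_of_norm_le_const (a := 0) (b := t)
    (f := fun τ => ∫ σ in (0:ℝ)..s, p * (p - 1) * (σ + τ + v) ^ (p - 2))
    (C := p * (p - 1) * max ((s + t + v) ^ (p - 2)) (v ^ (p - 2)) * s) (fun τ hτ => ?_)
  · rw [sub_zero, abs_of_pos ht] at bound
    exact (Real.le_norm_self _).trans bound
  · rw [Set.uIoc_of_le ht.le] at hτ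
    have bound := norm_integral_le_of_norm_le_const (a := 0) (b := s)
      (f := fun σ => p * (p - 1) * (σ + τ + v) ^ (p - 2))
      (C := p * (p - 1) * max ((s + t + v) ^ (p - 2)) (v ^ (p - 2))) (fun σ hσ => ?_)
    · rwa [sub_zero, abs_of_pos hs] at bound
    · rw [Set.uIoc_of_le hs.le] at hσ
      have hpos : 0 ≤ σ + τ + v := by linarith [hσ.1, hτ.1]
      rw [Real.norm_of_nonneg (mul_nonneg hpp (Real.rpow_nonneg hpos _))]
      exact mul_le_mul_of_nonneg_left
        (rpow_le_max_endpoints hv (by linarith [hσ.1, hτ.1]) (by linarith [hσ.2, hτ.2])) hpp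
end
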